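/- arXiv:0906.2369 — 7 statements merged into one kernel-verified Lean document; each statement's English description precedes it below -/
import Mathlib

section
/- Let B = (φ, L, ψ) be a quasi-alphabetic tree bimorphism with φ : T_Γ(Z) → T_Σ(V) and ψ : T_Γ(Z) → T_Δ(Y). Let [Σ × Δ] be the ranked alphabet with [Σ × Δ]_k = {⟨t,u⟩ | t ∈ Σ(V ∪ X_k) ∩ C^k_Σ(V), u ∈ Δ(Y ∪ X_k) ∩ C^k_Δ(Y)}, and let ρ^1 : T_{[Σ×Δ]}(V × Y) → T_Σ(V) and ρ^2 : T_{[Σ×Δ]}(V × Y) → T_Δ(Y) be the canonical projection homomorphisms defined by ρ^1_{V×Y}(⟨v,y⟩) = v, ρ^1_k(⟨t,u⟩) = t, ρ^2_{V×Y}(⟨v,y⟩) = y, ρ^2_k(⟨t,u⟩) = u. Then there exists a quasi-alphabetic tree homomorphism η : T_Γ(Z) → T_{[Σ×Δ]}(V × Y) such that tφ = (tη)ρ^1 and tψ = (tη)ρ^2 for every t ∈ T_Γ(Z). -/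
/-!
The homomorphism `η` sends a leaf `z` to the pair of leaves `⟨zφ, zψ⟩`, and a symbol `f` of rank
`k` to `⟨φ_k(f), ψ_k(f)⟩(x₁, …, x_k)`. The pair is a symbol of `[S × D]`: both components are
shallow by quasi-alphabeticity, and linearity together with completeness says that each variable
occurs exactly once (`TreeHom.QuasiAlphabetic.symCtx`). Since `η` keeps the variables of every
symbol in order, it is quasi-alphabetic, and the two equations follow by induction on the tree.
-/

set_option autoImplicit false

inductive RTree (S : Type) (V : Type) (rk : S → ℕ) : Type
  | leaf : V → RTree S V rk
  | node : (f : S) → (Fin (rk f) → RTree S V rk) → RTree S V rk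

namespace RTree

variable {S V D Y β : Type} {rkS : S → ℕ} {rkD : D → ℕ}

def height : RTree S V rkS → ℕ
  | leaf _ => 0
  | node _ c => Finset.univ.sup fun i => (c i).height + 1

def yield : RTree S V rkS → List V
  | leaf v => [v]
  | node _ c => (List.ofFn fun i => (c i).yield).flatten

def subst : RTree D (Y ⊕ β) rkD → (β → RTree D Y rkD) → RTree D Y rkD
  | leaf (Sum.inl y), _ => leaf y
  | leaf (Sum.inr b), σ => σ b
  | node f c, σ => node f fun i => (c i).subst σ

def ivars : RTree D (Y ⊕ β) rkD → Multiset β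
  | leaf (Sum.inl _) => 0
  | leaf (Sum.inr b) => {b}
  | node _ c => ∑ i, (c i).ivars

def Shallow : RTree S V rkS → Prop
  | leaf _ => False
  | node _ c => ∀ i, ∃ v, c i = leaf v

def VarShallow : RTree D (Y ⊕ β) rkD → Prop
  | leaf _ => False
  | node _ c => ∀ i, ∃ b, c i = leaf (Sum.inr b)

end RTree

/-- A tree homomorphism `φ : T_S(V) → T_D(Y)`, given by a map on leaves and a
map sending each symbol `f` of rank `k` to a tree over `D` with leaves in `Y ⊕ X_k`. -/
structure TreeHom (S V : Type) (rkS : S → ℕ) (D Y : Type) (rkD : D → ℕ) where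
  leafMap : V → RTree D Y rkD
  symMap : (f : S) → RTree D (Y ⊕ Fin (rkS f)) rkD

namespace TreeHom

variable {S V D Y : Type} {rkS : S → ℕ} {rkD : D → ℕ}

/-- Application of a tree homomorphism: `f(t₁,…,t_k)φ = φ_k(f)[t₁φ,…,t_kφ]`. -/
def apply (φ : TreeHom S V rkS D Y rkD) : RTree S V rkS → RTree D Y rkD
  | .leaf v => φ.leafMap v
  | .node f c => (φ.symMap f).subst fun i => φ.apply (c i)

/-- Linear: every variable occurs at most once in each `φ_k(f)`. -/
def Linear (φ : TreeHom S V rkS D Y rkD) : Prop := ∀ f, (φ.symMap f).ivars.Nodup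

/-- Complete (nondeleting): every variable of `X_k` occurs at least once in `φ_k(f)`. -/
def Complete (φ : TreeHom S V rkS D Y rkD) : Prop :=
  ∀ f, ∀ i : Fin (rkS f), i ∈ (φ.symMap f).ivars

/-- `φ_V(v) ∈ Y` for every leaf symbol `v`. -/
def LeafToLeaf (φ : TreeHom S V rkS D Y rkD) : Prop := ∀ v, ∃ y, φ.leafMap v = .leaf y

/-- Symbol-to-symbol: leaves go to leaves and `φ_k(f) ∈ D(X_k)`. -/
def SymbolToSymbol (φ : TreeHom S V rkS D Y rkD) : Prop :=
  φ.LeafToLeaf ∧ ∀ f, (φ.symMap f).VarShallow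

/-- Quasi-alphabetic: linear, complete, leaves to leaves, and `φ_k(f) ∈ D(Y ∪ X_k)`. -/
def QuasiAlphabetic (φ : TreeHom S V rkS D Y rkD) : Prop :=
  φ.Linear ∧ φ.Complete ∧ φ.LeafToLeaf ∧ ∀ f, (φ.symMap f).Shallow

/-- Alphabetic: linear, leaves to leaves, and `φ_k(f) ∈ X_k ∪ D(X_k)`. -/
def Alphabetic (φ : TreeHom S V rkS D Y rkD) : Prop :=
  φ.Linear ∧ φ.LeafToLeaf ∧
    ∀ f, (∃ j, φ.symMap f = .leaf (Sum.inr j)) ∨ (φ.symMap f).VarShallow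

/-- Strictly alphabetic: complete, alphabetic, and symbol-to-symbol. -/
def StrictlyAlphabetic (φ : TreeHom S V rkS D Y rkD) : Prop :=
  φ.Complete ∧ φ.Alphabetic ∧ φ.SymbolToSymbol

end TreeHom

/-- A finite-state (bottom-up/top-down) tree automaton. -/
structure FTA (S V : Type) (rk : S → ℕ) where
  Q : Type
  [finQ : Fintype Q]
  final : Set Q
  leafTrans : Q → V → Prop
  nodeTrans : (q : Q) → (f : S) → (Fin (rk f) → Q) → Prop

/-- Acceptance of a tree in a state of a finite-state tree automaton. -/
inductive FTA.Reach {S V : Type} {rk : S → ℕ} (A : FTA S V rk) : A.Q → RTree S V rk → Prop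
  | leaf {q v} : A.leafTrans q v → FTA.Reach A q (RTree.leaf v)
  | node {q f qs c} : A.nodeTrans q f qs → (∀ i, FTA.Reach A (qs i) (c i)) →
      FTA.Reach A q (RTree.node f c)

/-- A tree language is recognizable if it is accepted by a finite-state tree automaton. -/
def Recognizable {S V : Type} {rk : S → ℕ} (L : Set (RTree S V rk)) : Prop :=
  ∃ A : FTA S V rk, L = { t | ∃ q ∈ A.final, A.Reach q t }

/-- A class of tree homomorphisms (for every choice of alphabets). -/
abbrev HomClass : Type 1 :=
  ∀ (G Z : Type) (rkG : G → ℕ) (D Y : Type) (rkD : D → ℕ), TreeHom G Z rkG D Y rkD → Prop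

/-- `InBim P Q τ` states that the tree transformation `τ` is defined by a bimorphism
`(φ, L, ψ)` with `φ ∈ P`, `ψ ∈ Q` and `L` a recognizable tree language (over a finite
center alphabet). -/
def InBim {S V D Y : Type} {rkS : S → ℕ} {rkD : D → ℕ} (P Qc : HomClass)
    (τ : Set (RTree S V rkS × RTree D Y rkD)) : Prop :=
  ∃ (G Z : Type) (rkG : G → ℕ) (_ : Fintype G) (_ : Fintype Z)
    (φ : TreeHom G Z rkG S V rkS) (ψ : TreeHom G Z rkG D Y rkD) (L : Set (RTree G Z rkG)),
      P G Z rkG S V rkS φ ∧ Qc G Z rkG D Y rkD ψ ∧ Recognizable L ∧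
      τ = { p | ∃ t ∈ L, p = (φ.apply t, ψ.apply t) }

/-- The class of quasi-alphabetic tree homomorphisms. -/
def qaHC : HomClass := fun _ _ _ _ _ _ φ => φ.QuasiAlphabetic

/-- The class of alphabetic tree homomorphisms. -/
def aHC : HomClass := fun _ _ _ _ _ _ φ => φ.Alphabetic

/-- The class of strictly alphabetic tree homomorphisms. -/
def saHC : HomClass := fun _ _ _ _ _ _ φ => φ.StrictlyAlphabetic

/-- The class of linear tree homomorphisms. -/
def lHC : HomClass := fun _ _ _ _ _ _ φ => φ.Linear

/-- The class of all tree homomorphisms. -/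
def allHC : HomClass := fun _ _ _ _ _ _ _ => True

/-- A quasi-alphabetic relation: a tree transformation defined by a quasi-alphabetic
tree bimorphism. -/
def IsQARel {S V D Y : Type} {rkS : S → ℕ} {rkD : D → ℕ}
    (τ : Set (RTree S V rkS × RTree D Y rkD)) : Prop :=
  InBim qaHC qaHC τ
/-- Rank-`k` symbols of the product alphabet `[S × D]`: shallow contexts in
`S(V ∪ X_k) ∩ C^k_S(V)`. -/
def ShallowCtx (S V : Type) (rk : S → ℕ) (k : ℕ) : Type :=
  { t : RTree S (V ⊕ Fin k) rk // t.Shallow ∧ ∀ j : Fin k, t.ivars.count j = 1 }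

/-- The product ranked alphabet `[S × D]`. -/
def ProdSym (S V : Type) (rkS : S → ℕ) (D Y : Type) (rkD : D → ℕ) : Type :=
  Σ k : ℕ, ShallowCtx S V rkS k × ShallowCtx D Y rkD k

/-- The rank of a symbol of `[S × D]`. -/
def prodRk {S V : Type} {rkS : S → ℕ} {D Y : Type} {rkD : D → ℕ} :
    ProdSym S V rkS D Y rkD → ℕ := Sigma.fst

/-- The first canonical projection homomorphism `ρ¹ : T_{[S×D]}(V × Y) → T_S(V)`. -/
def rho1 (S V : Type) (rkS : S → ℕ) (D Y : Type) (rkD : D → ℕ) :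
    TreeHom (ProdSym S V rkS D Y rkD) (V × Y) prodRk S V rkS where
  leafMap p := RTree.leaf p.1
  symMap s := s.2.1.val

/-- The second canonical projection homomorphism `ρ² : T_{[S×D]}(V × Y) → T_D(Y)`. -/
def rho2 (S V : Type) (rkS : S → ℕ) (D Y : Type) (rkD : D → ℕ) :
    TreeHom (ProdSym S V rkS D Y rkD) (V × Y) prodRk D Y rkD where
  leafMap p := RTree.leaf p.2
  symMap s := s.2.2.val
/-- A finite-state relabeling: rules `q(f(x₁,…,x_k)) → g(q₁(x₁),…,q_k(x_k))`
with `f ∈ S_k`, `g ∈ D_k` (and analogous rules relabeling leaves). -/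
structure Relabeling (S V : Type) (rkS : S → ℕ) (D Y : Type) (rkD : D → ℕ) where
  Q : Type
  [finQ : Fintype Q]
  final : Set Q
  leafRule : Q → V → Y → Prop
  nodeRule : (q : Q) → (f : S) → (g : D) → rkD g = rkS f → (Fin (rkS f) → Q) → Prop

/-- Runs of a finite-state relabeling. -/
inductive Relabeling.Run {S V D Y : Type} {rkS : S → ℕ} {rkD : D → ℕ}
    (M : Relabeling S V rkS D Y rkD) : M.Q → RTree S V rkS → RTree D Y rkD → Prop
  | leaf {q v y} : M.leafRule q v y → Relabeling.Run M q (RTree.leaf v) (RTree.leaf y)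
  | node {q f g} (h : rkD g = rkS f) {qs : Fin (rkS f) → M.Q}
      {c : Fin (rkS f) → RTree S V rkS} {c' : Fin (rkD g) → RTree D Y rkD} :
      M.nodeRule q f g h qs →
      (∀ i : Fin (rkS f), Relabeling.Run M (qs i) (c i) (c' (Fin.cast h.symm i))) →
      Relabeling.Run M q (RTree.node f c) (RTree.node g c')

/-- The tree transformation computed by a finite-state relabeling. -/
def Relabeling.rel {S V D Y : Type} {rkS : S → ℕ} {rkD : D → ℕ}
    (M : Relabeling S V rkS D Y rkD) : Set (RTree S V rkS × RTree D Y rkD) :=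
  { p | ∃ q ∈ M.final, M.Run q p.1 p.2 }

/-- A rule `q(f(x₁,…,x_k)) → r` of a top-down tree transducer, together with its
look-ahead language `la`.  The right-hand side `r` is a tree over the output alphabet
whose leaves are either output leaf symbols or pairs `(q', x_i)`. -/
structure TDRule (Q S V : Type) (rkS : S → ℕ) (D Y : Type) (rkD : D → ℕ) where
  st : Q
  sym : S
  rhs : RTree D (Y ⊕ (Q × Fin (rkS sym))) rkD
  la : Set (RTree S V rkS)

/-- A rule `q(v) → r` of a top-down tree transducer for an input leaf `v`. -/
structure TDLeafRule (Q S V : Type) (rkS : S → ℕ) (D Y : Type) (rkD : D → ℕ) where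
  st : Q
  lv : V
  rhs : RTree D Y rkD
  la : Set (RTree S V rkS)

/-- A top-down tree transducer (with look-ahead): finitely many states,
a set of final states and finitely many rules (each carrying a look-ahead language;
transducers without look-ahead have all look-ahead languages equal to `Set.univ`). -/
structure TDTT (S V : Type) (rkS : S → ℕ) (D Y : Type) (rkD : D → ℕ) where
  Q : Type
  [finQ : Fintype Q]
  final : Set Q
  rules : Set (TDRule Q S V rkS D Y rkD)
  leafRules : Set (TDLeafRule Q S V rkS D Y rkD)
  rules_finite : rules.Finite
  leafRules_finite : leafRules.Finite

/-- Runs of a top-down tree transducer with look-ahead. -/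
inductive TDTT.Run {S V D Y : Type} {rkS : S → ℕ} {rkD : D → ℕ}
    (M : TDTT S V rkS D Y rkD) : M.Q → RTree S V rkS → RTree D Y rkD → Prop
  | leaf {r : TDLeafRule M.Q S V rkS D Y rkD} :
      r ∈ M.leafRules → RTree.leaf r.lv ∈ r.la →
      TDTT.Run M r.st (RTree.leaf r.lv) r.rhs
  | node {r : TDRule M.Q S V rkS D Y rkD} {c : Fin (rkS r.sym) → RTree S V rkS}
      (σ : M.Q × Fin (rkS r.sym) → RTree D Y rkD) :
      r ∈ M.rules → RTree.node r.sym c ∈ r.la →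
      (∀ p ∈ r.rhs.ivars, TDTT.Run M p.1 (c p.2) (σ p)) →
      TDTT.Run M r.st (RTree.node r.sym c) (r.rhs.subst σ)

/-- The tree transformation computed by a top-down tree transducer. -/
def TDTT.rel {S V D Y : Type} {rkS : S → ℕ} {rkD : D → ℕ}
    (M : TDTT S V rkS D Y rkD) : Set (RTree S V rkS × RTree D Y rkD) :=
  { p | ∃ q ∈ M.final, M.Run q p.1 p.2 }

/-- Linear: every variable occurs at most once in the right-hand side of each rule. -/
def TDTT.Linear {S V D Y : Type} {rkS : S → ℕ} {rkD : D → ℕ}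
    (M : TDTT S V rkS D Y rkD) : Prop :=
  ∀ r ∈ M.rules, (Multiset.map Prod.snd r.rhs.ivars).Nodup

/-- Nondeleting: every variable occurs at least once in the right-hand side of each rule. -/
def TDTT.Nondeleting {S V D Y : Type} {rkS : S → ℕ} {rkD : D → ℕ}
    (M : TDTT S V rkS D Y rkD) : Prop :=
  ∀ r ∈ M.rules, ∀ i : Fin (rkS r.sym), i ∈ Multiset.map Prod.snd r.rhs.ivars

/-- No look-ahead: all look-ahead languages are trivial. -/
def TDTT.NoLookahead {S V D Y : Type} {rkS : S → ℕ} {rkD : D → ℕ}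
    (M : TDTT S V rkS D Y rkD) : Prop :=
  (∀ r ∈ M.rules, r.la = Set.univ) ∧ (∀ r ∈ M.leafRules, r.la = Set.univ)

/-- A language of the form `L[T_S,…,T_S]` for a finite tree language `L ⊆ T_S(X)`. -/
def PatternLang {S V : Type} {rkS : S → ℕ} (la : Set (RTree S V rkS)) : Prop :=
  ∃ (n : ℕ) (P : Finset (RTree S (V ⊕ Fin n) rkS)),
    la = { t | ∃ p ∈ P, ∃ σ : Fin n → RTree S V rkS, t = RTree.subst p σ }

/-- Finite look-ahead. -/
def TDTT.FiniteLookahead {S V D Y : Type} {rkS : S → ℕ} {rkD : D → ℕ}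
    (M : TDTT S V rkS D Y rkD) : Prop :=
  (∀ r ∈ M.rules, PatternLang r.la) ∧ (∀ r ∈ M.leafRules, PatternLang r.la)

/-- Regular look-ahead. -/
def TDTT.RegularLookahead {S V D Y : Type} {rkS : S → ℕ} {rkD : D → ℕ}
    (M : TDTT S V rkS D Y rkD) : Prop :=
  (∀ r ∈ M.rules, Recognizable r.la) ∧ (∀ r ∈ M.leafRules, Recognizable r.la)
/-- A context-free tree grammar over terminal ranked alphabet `S` and leaf alphabet `V`:
ranked nonterminals `N` with a nullary start nonterminal, and finitely many productions
`A(x₁,…,x_k) → t` with `t ∈ T_{S∪N}(V ∪ X_k)`. -/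
structure CFTG (S V : Type) (rkS : S → ℕ) where
  N : Type
  rkN : N → ℕ
  [finN : Fintype N]
  start : N
  start_rank : rkN start = 0
  prods : Set ((A : N) × RTree (S ⊕ N) (V ⊕ Fin (rkN A)) (Sum.elim rkS rkN))
  prods_finite : prods.Finite

/-- Embedding of terminal trees into trees over the extended alphabet `S ∪ N`. -/
def embedCFT {S V : Type} {rkS : S → ℕ} {N : Type} {rkN : N → ℕ} :
    RTree S V rkS → RTree (S ⊕ N) V (Sum.elim rkS rkN)
  | .leaf v => .leaf v
  | .node f c => .node (Sum.inl f) fun i => embedCFT (c i)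

/-- One-step rewriting of sentential forms of a context-free tree grammar. -/
inductive CFTG.Rw {S V : Type} {rkS : S → ℕ} (G : CFTG S V rkS) :
    RTree (S ⊕ G.N) V (Sum.elim rkS G.rkN) → RTree (S ⊕ G.N) V (Sum.elim rkS G.rkN) → Prop
  | rule {A : G.N} {rhs : RTree (S ⊕ G.N) (V ⊕ Fin (G.rkN A)) (Sum.elim rkS G.rkN)}
      (h : (⟨A, rhs⟩ : (B : G.N) × RTree (S ⊕ G.N) (V ⊕ Fin (G.rkN B)) (Sum.elim rkS G.rkN)) ∈ G.prods)
      (c : Fin (G.rkN A) → RTree (S ⊕ G.N) V (Sum.elim rkS G.rkN)) :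
      CFTG.Rw G (RTree.node (Sum.inr A) c) (rhs.subst c)
  | congr {f : S ⊕ G.N} {c : Fin (Sum.elim rkS G.rkN f) → RTree (S ⊕ G.N) V (Sum.elim rkS G.rkN)}
      {i : Fin (Sum.elim rkS G.rkN f)} {t'} :
      CFTG.Rw G (c i) t' → CFTG.Rw G (RTree.node f c) (RTree.node f (Function.update c i t'))

/-- The sentential form consisting of the start nonterminal. -/
def CFTG.startTree {S V : Type} {rkS : S → ℕ} (G : CFTG S V rkS) :
    RTree (S ⊕ G.N) V (Sum.elim rkS G.rkN) :=
  RTree.node (Sum.inr G.start) (fun i => False.elim (by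
    have h : i.val < G.rkN G.start := i.isLt
    rw [G.start_rank] at h
    exact Nat.not_lt_zero _ h))

/-- A tree language is algebraic (context-free) if it is generated by a
context-free tree grammar. -/
def IsAlgebraicTreeLang {S V : Type} {rkS : S → ℕ} (L : Set (RTree S V rkS)) : Prop :=
  ∃ G : CFTG S V rkS,
    L = { t | Relation.ReflTransGen G.Rw G.startTree (embedCFT (N := G.N) (rkN := G.rkN) t) }

/-- The tree `φ_k(f)` of a quasi-alphabetic homomorphism, as a shallow context: each variable
occurs at most once by linearity and at least once by completeness. -/
def TreeHom.QuasiAlphabetic.symCtx {G Z S V : Type} {rkG : G → ℕ} {rkS : S → ℕ}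
    {φ : TreeHom G Z rkG S V rkS} (h : φ.QuasiAlphabetic) (f : G) :
    ShallowCtx S V rkS (rkG f) :=
  ⟨φ.symMap f, h.2.2.2 f, fun j => Multiset.count_eq_one_of_mem (h.1 f) (h.2.1 f j)⟩

/-- The variables of `g(x₁, …, x_k)` are `x₁, …, x_k`, once each. -/
theorem RTree.ivars_node_vars {D Y : Type} {rkD : D → ℕ} (g : D) :
    (RTree.node g fun i => .leaf (.inr i) : RTree D (Y ⊕ Fin (rkD g)) rkD).ivars
      = (Finset.univ : Finset (Fin (rkD g))).val := by
  simp only [RTree.ivars]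
  exact Finset.sum_multiset_singleton _

/-- For every quasi-alphabetic tree bimorphism `(φ, L, ψ)` with
`φ : T_G(Z) → T_S(V)` and `ψ : T_G(Z) → T_D(Y)` there exists a quasi-alphabetic tree
homomorphism `η : T_G(Z) → T_{[S×D]}(V × Y)` such that `tφ = (tη)ρ¹` and `tψ = (tη)ρ²`
for every `t ∈ T_G(Z)`. -/
theorem exists_canonical_representation {G Z S V D Y : Type}
    {rkG : G → ℕ} {rkS : S → ℕ} {rkD : D → ℕ}
    [Fintype G] [Fintype Z] [Fintype S] [Fintype V] [Fintype D] [Fintype Y]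
    (φ : TreeHom G Z rkG S V rkS) (ψ : TreeHom G Z rkG D Y rkD)
    (L : Set (RTree G Z rkG))
    (hφ : φ.QuasiAlphabetic) (hψ : ψ.QuasiAlphabetic) (hL : Recognizable L) :
    ∃ η : TreeHom G Z rkG (ProdSym S V rkS D Y rkD) (V × Y) prodRk,
      η.QuasiAlphabetic ∧
      ∀ t : RTree G Z rkG,
        φ.apply t = (rho1 S V rkS D Y rkD).apply (η.apply t) ∧
        ψ.apply t = (rho2 S V rkS D Y rkD).apply (η.apply t) := by
  choose a ha using hφ.2.2.1
  choose b hb using hψ.2.2.1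
  let g : G → ProdSym S V rkS D Y rkD := fun f => ⟨rkG f, hφ.symCtx f, hψ.symCtx f⟩
  let η : TreeHom G Z rkG (ProdSym S V rkS D Y rkD) (V × Y) prodRk :=
    { leafMap := fun z => .leaf (a z, b z)
      symMap := fun f => .node (g f) fun i => .leaf (.inr i) }
  -- `prodRk (g f)` reduces to `rkG f`, so the variables of `η_k(f)` are indexed as required.
  have hvars : ∀ f, (η.symMap f).ivars = (Finset.univ : Finset (Fin (rkG f))).val :=
    fun f => RTree.ivars_node_vars (g f)
  refine ⟨η, ⟨fun f => ?_, fun f i => ?_, fun z => ⟨_, rfl⟩, fun f i => ⟨_, rfl⟩⟩, fun t => ?_⟩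
  · rw [hvars]
    exact Finset.univ.nodup
  · rw [hvars]
    exact Finset.mem_univ i
  · induction t with
    | leaf z => exact ⟨ha z, hb z⟩
    | node f c ih =>
      constructor
      · change (φ.symMap f).subst _ = (φ.symMap f).subst _
        congr 1
        exact funext fun i => (ih i).1
      · change (ψ.symMap f).subst _ = (ψ.symMap f).subst _
        congr 1
        exact funext fun i => (ih i).2
end

section
/- A relation τ ⊆ T_Σ(V) × T_Δ(Y) is quasi-alphabetic (i.e., τ = τ_B for some quasi-alphabetic tree bimorphism B) if and only if there exists a recognizable tree language L ⊆ T_{[Σ×Δ]}(V × Y) such that τ = {(tρ^1, tρ^2) | t ∈ L}, where [Σ × Δ] is the ranked alphabet with [Σ × Δ]_k = {⟨t,u⟩ | t ∈ Σ(V ∪ X_k) ∩ C^k_Σ(V), u ∈ Δ(Y ∪ X_k) ∩ C^k_Δ(Y)} and ρ^1, ρ^2 are the canonical projection homomorphisms to T_Σ(V) and T_Δ(Y). -/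
/-!
The product alphabet `[S × D]` is the universal centre alphabet of a quasi-alphabetic
bimorphism.

Given a bimorphism `(φ, L, ψ)`, sending each centre symbol `g` to `⟨φ(g), ψ(g)⟩` and each centre
leaf `z` to `⟨φ(z), ψ(z)⟩` is a rank-preserving relabeling `m` with `φ = ρ¹ ∘ m` and `ψ = ρ² ∘ m`
(`apply_relabel`). Relabelings preserve recognizability (`Recognizable.image_relabel`): keep the
states and let the new automaton guess a preimage of each symbol. Hence `m(L)` is the required
language.

Conversely `(ρ¹, L, ρ²)` is itself a quasi-alphabetic bimorphism. The one point to check is that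
its centre alphabet is finite: a shallow context is a root symbol `f` together with a word of
`rk f` leaves, and a context in `k` variables has `k ≤ rk f`, so ranks in `[S × D]` are bounded.
-/

set_option autoImplicit false

/-! ### Relabelings and recognizability -/

namespace RTree

/-- Replacement of every symbol and every leaf of a tree by its image under a map of ranked
alphabets `m` and a map of leaf alphabets `l`. The target rank is a variable `rkH`, and the
preservation of ranks is a hypothesis that is `rfl` in the application to `prodRk`. -/
def relabel {G Z H W : Type} {rkG : G → ℕ} {rkH : H → ℕ} (m : G → H)
    (hm : ∀ g, rkH (m g) = rkG g) (l : Z → W) : RTree G Z rkG → RTree H W rkH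
  | leaf z => leaf (l z)
  | node g c => node (m g) fun i => (c (Fin.cast (hm g) i)).relabel m hm l

end RTree

/-- The automaton accepting the relabelings of the trees accepted by `A`: it has the same states
and nondeterministically guesses a preimage of each symbol read. -/
def FTA.image {G Z H W : Type} {rkG : G → ℕ} {rkH : H → ℕ} (A : FTA G Z rkG) (m : G → H)
    (hm : ∀ g, rkH (m g) = rkG g) (l : Z → W) : FTA H W rkH where
  Q := A.Q
  finQ := A.finQ
  final := A.final
  leafTrans q w := ∃ z, A.leafTrans q z ∧ l z = w
  nodeTrans q h qs := ∃ g, ∃ e : m g = h,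
    A.nodeTrans q g fun i => qs (Fin.cast ((hm g).symm.trans (congrArg rkH e)) i)

theorem FTA.image_reach_iff {G Z H W : Type} {rkG : G → ℕ} {rkH : H → ℕ} (A : FTA G Z rkG)
    (m : G → H) (hm : ∀ g, rkH (m g) = rkG g) (l : Z → W) (q : A.Q) (u : RTree H W rkH) :
    FTA.Reach (S := H) (V := W) (rk := rkH) (A.image m hm l) q u ↔
      ∃ t, A.Reach q t ∧ t.relabel m hm l = u := by
  constructor
  · intro h
    refine FTA.Reach.rec (A := A.image m hm l)
      (motive := fun (q : A.Q) u _ => ∃ t, A.Reach q t ∧ t.relabel m hm l = u) ?_ ?_ h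
    · rintro q w ⟨z, hz, rfl⟩
      exact ⟨.leaf z, .leaf hz, rfl⟩
    · rintro q f qs c ⟨g, rfl, hg⟩ _ ih
      choose t ht1 ht2 using ih
      refine ⟨.node g fun i => t (Fin.cast (hm g).symm i), .node hg fun i => ht1 _, ?_⟩
      simp only [RTree.relabel]
      congr 1
      funext i
      exact ht2 i
  · rintro ⟨t, ht, rfl⟩
    induction ht with
    | leaf h => exact .leaf ⟨_, h, rfl⟩
    | @node q f qs c h _ ih =>
      exact FTA.Reach.node (A := A.image m hm l) (f := m f)
        (qs := fun i => qs (Fin.cast (hm f) i)) ⟨f, rfl, h⟩ fun i => ih _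

theorem Recognizable.image_relabel {G Z H W : Type} {rkG : G → ℕ} {rkH : H → ℕ}
    {L : Set (RTree G Z rkG)} (hL : Recognizable L) (m : G → H)
    (hm : ∀ g, rkH (m g) = rkG g) (l : Z → W) :
    Recognizable (RTree.relabel m hm l '' L) := by
  obtain ⟨A, rfl⟩ := hL
  refine ⟨A.image m hm l, ?_⟩
  ext u
  constructor
  · rintro ⟨t, ⟨q, hq, ht⟩, rfl⟩
    exact ⟨q, hq, (A.image_reach_iff m hm l q _).2 ⟨t, ht, rfl⟩⟩
  · rintro ⟨q, hq, hu⟩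
    obtain ⟨t, ht, rfl⟩ := (A.image_reach_iff m hm l q u).1 hu
    exact ⟨t, ⟨q, hq, ht⟩, rfl⟩

/-- A homomorphism that factors through a relabeling on leaves and symbols factors through it on
all trees. The relabeling preserves ranks definitionally, so that the two families of symbol
images have the same type. -/
theorem TreeHom.apply_relabel {G Z H W D Y : Type} {rkH : H → ℕ} {rkD : D → ℕ}
    (m : G → H) (l : Z → W) (φ : TreeHom G Z (rkH ∘ m) D Y rkD) (ρ : TreeHom H W rkH D Y rkD)
    (hl : ∀ z, ρ.leafMap (l z) = φ.leafMap z) (hs : ∀ g, ρ.symMap (m g) = φ.symMap g)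
    (t : RTree G Z (rkH ∘ m)) :
    ρ.apply (t.relabel m (fun _ => rfl) l) = φ.apply t := by
  induction t with
  | leaf z => exact hl z
  | node g c ih =>
    simp only [RTree.relabel, TreeHom.apply]
    rw [hs]
    congr 1
    funext i
    exact ih i

/-! ### Finiteness of the product alphabet -/

/-- A shallow context is determined by its root symbol and the word of its leaves. -/
theorem ShallowCtx.finite (S V : Type) (rk : S → ℕ) [Finite S] [Finite V] (k : ℕ) :
    Finite (ShallowCtx S V rk k) := by
  let F : (Σ f : S, Fin (rk f) → V ⊕ Fin k) → RTree S (V ⊕ Fin k) rk :=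
    fun p => .node p.1 fun i => .leaf (p.2 i)
  have hsub : {t : RTree S (V ⊕ Fin k) rk |
      t.Shallow ∧ ∀ j : Fin k, t.ivars.count j = 1} ⊆ Set.range F := by
    rintro (v | ⟨f, c⟩) ⟨h, -⟩
    · exact h.elim
    · choose v hv using h
      exact ⟨⟨f, v⟩, congrArg (RTree.node f) (funext fun i => (hv i).symm)⟩
  exact ((Set.finite_range F).subset hsub).to_subtype

/-- The number of variables of a shallow context is at most the rank of its root, since each child
contains at most one variable. -/
theorem ShallowCtx.exists_le_rank {S V : Type} {rk : S → ℕ} {k : ℕ}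
    (t : ShallowCtx S V rk k) : ∃ f : S, k ≤ rk f := by
  obtain ⟨t, hsh, hc⟩ := t
  cases t with
  | leaf v => exact hsh.elim
  | node f c =>
    refine ⟨f, ?_⟩
    have hcard : ∀ i, Multiset.card (c i).ivars ≤ 1 := by
      intro i
      obtain ⟨v | b, hv⟩ := hsh i <;> simp [hv, RTree.ivars]
    calc k = Multiset.card (Finset.univ : Finset (Fin k)).val := by simp
      _ ≤ Multiset.card (RTree.node f c).ivars := by
        refine Multiset.card_le_card ((Multiset.le_iff_subset Finset.univ.nodup).2 ?_)
        intro j _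
        exact Multiset.count_pos.1 (by rw [hc j]; exact one_pos)
      _ = ∑ i, Multiset.card (c i).ivars := by simp [RTree.ivars]
      _ ≤ ∑ _i : Fin (rk f), 1 := Finset.sum_le_sum fun i _ => hcard i
      _ = rk f := by simp

theorem ProdSym.finite (S V : Type) (rkS : S → ℕ) (D Y : Type) (rkD : D → ℕ)
    [Finite S] [Finite V] [Finite D] [Finite Y] : Finite (ProdSym S V rkS D Y rkD) := by
  obtain ⟨N, hN⟩ := (Set.finite_range rkS).bddAbove
  have := fun k => ShallowCtx.finite S V rkS k
  have := fun k => ShallowCtx.finite D Y rkD k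
  let F : (Σ k : Fin (N + 1), ShallowCtx S V rkS k × ShallowCtx D Y rkD k) →
      ProdSym S V rkS D Y rkD := fun p => ⟨p.1, p.2⟩
  refine Finite.of_surjective F ?_
  rintro ⟨k, t, u⟩
  obtain ⟨f, hf⟩ := t.exists_le_rank
  exact ⟨⟨⟨k, Nat.lt_succ_of_le (hf.trans (hN ⟨f, rfl⟩))⟩, t, u⟩, rfl⟩

/-! ### Quasi-alphabetic homomorphisms and shallow contexts -/

/-- A homomorphism sending leaves to leaves and symbols to shallow contexts is
quasi-alphabetic. -/
theorem TreeHom.quasiAlphabetic_of_count {S V D Y : Type} {rkS : S → ℕ} {rkD : D → ℕ}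
    (φ : TreeHom S V rkS D Y rkD) (hl : φ.LeafToLeaf)
    (hs : ∀ f, (φ.symMap f).Shallow ∧ ∀ j, (φ.symMap f).ivars.count j = 1) :
    φ.QuasiAlphabetic :=
  ⟨fun f => Multiset.nodup_iff_count_le_one.2 fun j => ((hs f).2 j).le,
    fun f j => Multiset.count_pos.1 (by rw [(hs f).2 j]; exact one_pos), hl, fun f => (hs f).1⟩

/-- The shallow context assigned to a symbol by a quasi-alphabetic homomorphism. -/
def TreeHom.ctx {S V D Y : Type} {rkS : S → ℕ} {rkD : D → ℕ}
    (φ : TreeHom S V rkS D Y rkD) (h : φ.QuasiAlphabetic) (f : S) :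
    ShallowCtx D Y rkD (rkS f) :=
  ⟨φ.symMap f, h.2.2.2 f, fun j => Multiset.count_eq_one_of_mem (h.1 f) (h.2.1 f j)⟩

/-- A relation `τ ⊆ T_S(V) × T_D(Y)` is quasi-alphabetic if and only if
there exists a recognizable tree language `L ⊆ T_{[S×D]}(V × Y)` such that
`τ = {(tρ¹, tρ²) | t ∈ L}`. -/
theorem isQARel_iff_exists_recognizable {S V D Y : Type} {rkS : S → ℕ} {rkD : D → ℕ}
    [Fintype S] [Fintype V] [Fintype D] [Fintype Y]
    (τ : Set (RTree S V rkS × RTree D Y rkD)) :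
    IsQARel τ ↔
      ∃ L : Set (RTree (ProdSym S V rkS D Y rkD) (V × Y) prodRk),
        Recognizable L ∧
        τ = { p | ∃ t ∈ L,
          p = ((rho1 S V rkS D Y rkD).apply t, (rho2 S V rkS D Y rkD).apply t) } := by
  constructor
  · rintro ⟨G, Z, rkG, _, _, φ, ψ, L, hφ, hψ, hL, rfl⟩
    choose v hv using hφ.2.2.1
    choose y hy using hψ.2.2.1
    let m : G → ProdSym S V rkS D Y rkD := fun g => ⟨rkG g, φ.ctx hφ g, ψ.ctx hψ g⟩
    let l : Z → V × Y := fun z => (v z, y z)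
    have h1 : ∀ t, (rho1 S V rkS D Y rkD).apply (t.relabel m (fun _ => rfl) l) = φ.apply t :=
      TreeHom.apply_relabel (rkH := prodRk) m l φ _ (fun z => (hv z).symm) fun _ => rfl
    have h2 : ∀ t, (rho2 S V rkS D Y rkD).apply (t.relabel m (fun _ => rfl) l) = ψ.apply t :=
      TreeHom.apply_relabel (rkH := prodRk) m l ψ _ (fun z => (hy z).symm) fun _ => rfl
    refine ⟨_, hL.image_relabel m (fun _ => rfl) l, ?_⟩
    ext p
    constructor
    · rintro ⟨t, ht, rfl⟩
      exact ⟨_, ⟨t, ht, rfl⟩, Prod.ext (h1 t).symm (h2 t).symm⟩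
    · rintro ⟨_, ⟨t, ht, rfl⟩, rfl⟩
      exact ⟨t, ht, Prod.ext (h1 t) (h2 t)⟩
  · rintro ⟨L, hL, hτ⟩
    have := ProdSym.finite S V rkS D Y rkD
    exact ⟨ProdSym S V rkS D Y rkD, V × Y, prodRk, Fintype.ofFinite _, inferInstance,
      rho1 S V rkS D Y rkD, rho2 S V rkS D Y rkD, L,
      TreeHom.quasiAlphabetic_of_count _ (fun p => ⟨p.1, rfl⟩) fun s => s.2.1.2,
      TreeHom.quasiAlphabetic_of_count _ (fun p => ⟨p.2, rfl⟩) fun s => s.2.2.2, hL, hτ⟩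
end

section
/- The class B(qaH, Rec, qaH) of quasi-alphabetic relations is closed under union: if τ_1, τ_2 ⊆ T_Σ(V) × T_Δ(Y) are both defined by quasi-alphabetic tree bimorphisms, then so is τ_1 ∪ τ_2. -/
/-! The union is defined by the disjoint sum of the two bimorphisms. The center alphabet is
the sum of the two center alphabets, the homomorphisms act on each summand as the given ones
(`TreeHom.sum`), and the automaton is the disjoint sum of the two automata (`FTA.sum`). A tree
accepted by the sum automaton in a state of one summand uses symbols of that summand only
(`FTA.sum_reach_inl`, `FTA.sum_reach_inr`), so the center language is the disjoint union of the
two given languages, and the sum homomorphisms restrict to the given ones on the two parts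
(`TreeHom.sum_apply_embL`, `TreeHom.sum_apply_embR`). -/

set_option autoImplicit false

/-- Embedding of trees over the first alphabet into trees over the sum alphabet. -/
def RTree.embL {G Z G' Z' : Type} {rk : G → ℕ} {rk' : G' → ℕ} :
    RTree G Z rk → RTree (G ⊕ G') (Z ⊕ Z') (Sum.elim rk rk')
  | .leaf z => .leaf (Sum.inl z)
  | .node f c => .node (Sum.inl f) fun i => (c i).embL

/-- Embedding of trees over the second alphabet into trees over the sum alphabet. -/
def RTree.embR {G Z G' Z' : Type} {rk : G → ℕ} {rk' : G' → ℕ} :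
    RTree G' Z' rk' → RTree (G ⊕ G') (Z ⊕ Z') (Sum.elim rk rk')
  | .leaf z => .leaf (Sum.inr z)
  | .node f c => .node (Sum.inr f) fun i => (c i).embR

section TreeHomSum

variable {G Z G' Z' D Y : Type} {rk : G → ℕ} {rk' : G' → ℕ} {rkD : D → ℕ}

/-- The homomorphism on the sum alphabet that acts as `φ` on the first summand and as `φ'` on
the second. -/
def TreeHom.sum (φ : TreeHom G Z rk D Y rkD) (φ' : TreeHom G' Z' rk' D Y rkD) :
    TreeHom (G ⊕ G') (Z ⊕ Z') (Sum.elim rk rk') D Y rkD where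
  leafMap := Sum.elim φ.leafMap φ'.leafMap
  symMap
    | Sum.inl f => φ.symMap f
    | Sum.inr f => φ'.symMap f

theorem TreeHom.sum_apply_embL (φ : TreeHom G Z rk D Y rkD) (φ' : TreeHom G' Z' rk' D Y rkD)
    (t : RTree G Z rk) : (φ.sum φ').apply t.embL = φ.apply t := by
  induction t with
  | leaf z => rfl
  | node f c ih => exact congrArg (φ.symMap f).subst (funext ih)

theorem TreeHom.sum_apply_embR (φ : TreeHom G Z rk D Y rkD) (φ' : TreeHom G' Z' rk' D Y rkD)
    (t : RTree G' Z' rk') : (φ.sum φ').apply t.embR = φ'.apply t := by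
  induction t with
  | leaf z => rfl
  | node f c ih => exact congrArg (φ'.symMap f).subst (funext ih)

theorem TreeHom.QuasiAlphabetic.sum {φ : TreeHom G Z rk D Y rkD}
    {φ' : TreeHom G' Z' rk' D Y rkD} (h : φ.QuasiAlphabetic) (h' : φ'.QuasiAlphabetic) :
    (φ.sum φ').QuasiAlphabetic := by
  obtain ⟨hl, hc, hv, hs⟩ := h
  obtain ⟨hl', hc', hv', hs'⟩ := h'
  exact ⟨Sum.rec hl hl', Sum.rec hc hc', Sum.rec hv hv', Sum.rec hs hs'⟩

end TreeHomSum

section FTASum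

variable {G Z G' Z' : Type} {rk' : G' → ℕ} {rk : G → ℕ}

/-- The disjoint sum of two tree automata: each transition stays within one summand. -/
def FTA.sum (A : FTA G Z rk) (A' : FTA G' Z' rk') :
    FTA (G ⊕ G') (Z ⊕ Z') (Sum.elim rk rk') where
  Q := A.Q ⊕ A'.Q
  finQ := @instFintypeSum _ _ A.finQ A'.finQ
  final := Sum.elim A.final A'.final
  leafTrans
    | Sum.inl q, Sum.inl z => A.leafTrans q z
    | Sum.inr q, Sum.inr z => A'.leafTrans q z
    | _, _ => False
  nodeTrans
    | Sum.inl q, Sum.inl f, qs => ∃ ps, qs = Sum.inl ∘ ps ∧ A.nodeTrans q f ps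
    | Sum.inr q, Sum.inr f, qs => ∃ ps, qs = Sum.inr ∘ ps ∧ A'.nodeTrans q f ps
    | _, _, _ => False

theorem FTA.sum_reach_embL (A : FTA G Z rk) (A' : FTA G' Z' rk') {q : A.Q} {t : RTree G Z rk}
    (h : A.Reach q t) : (A.sum A').Reach (Sum.inl q) t.embL := by
  induction h with
  | leaf h => exact FTA.Reach.leaf (A := A.sum A') h
  | @node q f qs c h _ ih =>
    exact FTA.Reach.node (A := A.sum A') (f := Sum.inl f) (qs := Sum.inl ∘ qs) ⟨qs, rfl, h⟩ ih

theorem FTA.sum_reach_embR (A : FTA G Z rk) (A' : FTA G' Z' rk') {q : A'.Q}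
    {t : RTree G' Z' rk'} (h : A'.Reach q t) : (A.sum A').Reach (Sum.inr q) t.embR := by
  induction h with
  | leaf h => exact FTA.Reach.leaf (A := A.sum A') h
  | @node q f qs c h _ ih =>
    exact FTA.Reach.node (A := A.sum A') (f := Sum.inr f) (qs := Sum.inr ∘ qs) ⟨qs, rfl, h⟩ ih

theorem FTA.sum_reach_inl (A : FTA G Z rk) (A' : FTA G' Z' rk')
    {t : RTree (G ⊕ G') (Z ⊕ Z') (Sum.elim rk rk')} :
    ∀ {q : A.Q}, (A.sum A').Reach (Sum.inl q) t → ∃ s, t = s.embL ∧ A.Reach q s := by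
  induction t with
  | leaf z =>
    rintro q (h | _)
    rcases z with z | z
    · exact ⟨.leaf z, rfl, .leaf h⟩
    · exact h.elim
  | node f c ih =>
    rintro q (_ | ⟨h, hc⟩)
    rcases f with f | f
    · obtain ⟨ps, rfl, h⟩ := h
      choose s hs hr using fun i => ih i (hc i)
      exact ⟨.node f s, congrArg (RTree.node (Sum.inl f)) (funext hs), .node h hr⟩
    · exact h.elim

theorem FTA.sum_reach_inr (A : FTA G Z rk) (A' : FTA G' Z' rk')
    {t : RTree (G ⊕ G') (Z ⊕ Z') (Sum.elim rk rk')} :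
    ∀ {q : A'.Q}, (A.sum A').Reach (Sum.inr q) t → ∃ s, t = s.embR ∧ A'.Reach q s := by
  induction t with
  | leaf z =>
    rintro q (h | _)
    rcases z with z | z
    · exact h.elim
    · exact ⟨.leaf z, rfl, .leaf h⟩
  | node f c ih =>
    rintro q (_ | ⟨h, hc⟩)
    rcases f with f | f
    · exact h.elim
    · obtain ⟨ps, rfl, h⟩ := h
      choose s hs hr using fun i => ih i (hc i)
      exact ⟨.node f s, congrArg (RTree.node (Sum.inr f)) (funext hs), .node h hr⟩

end FTASum

/-- The class of quasi-alphabetic relations is closed under union. -/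
theorem isQARel_union {S V D Y : Type} {rkS : S → ℕ} {rkD : D → ℕ}
    [Fintype S] [Fintype V] [Fintype D] [Fintype Y]
    (τ₁ τ₂ : Set (RTree S V rkS × RTree D Y rkD))
    (h₁ : IsQARel τ₁) (h₂ : IsQARel τ₂) :
    IsQARel (τ₁ ∪ τ₂) := by
  obtain ⟨G, Z, rk, _, _, φ, ψ, _, hφ, hψ, ⟨A, rfl⟩, rfl⟩ := h₁
  obtain ⟨G', Z', rk', _, _, φ', ψ', _, hφ', hψ', ⟨A', rfl⟩, rfl⟩ := h₂
  refine ⟨G ⊕ G', Z ⊕ Z', Sum.elim rk rk', inferInstance, inferInstance, φ.sum φ', ψ.sum ψ', _,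
    hφ.sum hφ', hψ.sum hψ', ⟨A.sum A', rfl⟩, ?_⟩
  ext p
  constructor
  · rintro (⟨t, ⟨q, hq, ht⟩, rfl⟩ | ⟨t, ⟨q, hq, ht⟩, rfl⟩)
    · exact ⟨t.embL, ⟨Sum.inl q, hq, A.sum_reach_embL A' ht⟩, by
        rw [TreeHom.sum_apply_embL, TreeHom.sum_apply_embL]⟩
    · exact ⟨t.embR, ⟨Sum.inr q, hq, A.sum_reach_embR A' ht⟩, by
        rw [TreeHom.sum_apply_embR, TreeHom.sum_apply_embR]⟩
  · rintro ⟨t, ⟨q | q, hq, ht⟩, rfl⟩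
    · obtain ⟨s, rfl, hs⟩ := A.sum_reach_inl A' ht
      exact Or.inl ⟨s, ⟨q, hq, hs⟩, by
        rw [TreeHom.sum_apply_embL, TreeHom.sum_apply_embL]⟩
    · obtain ⟨s, rfl, hs⟩ := A.sum_reach_inr A' ht
      exact Or.inr ⟨s, ⟨q, hq, hs⟩, by
        rw [TreeHom.sum_apply_embR, TreeHom.sum_apply_embR]⟩
end

section
/- Any class C of tree transformations satisfying lcssH ⊆ C ⊆ B(H, Rec, lH) is not closed under intersection. In particular, there exist two linear complete symbol-to-symbol tree homomorphisms ψ_1, ψ_2 (viewed as tree transformations) whose intersection ψ_1 ∩ ψ_2 is not definable by any bimorphism (φ, L, ψ) with φ an arbitrary tree homomorphism, L recognizable, and ψ a linear tree homomorphism. -/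
/-!
Over one binary symbol and one leaf symbol, let `ψ₁` be the identity homomorphism and `ψ₂` the
mirror homomorphism `σ ↦ σ(x₂, x₁)`. Then `ψ₁ ∩ ψ₂` is the identity on the set of mirror-symmetric
trees, so if it were defined by a bimorphism `(φ, L, ψ)` with `ψ` linear and `L` recognizable, the
set of symmetric trees would be `Lψ`.

This is refuted by a pigeonhole argument. For a tree `s`, record (`profile`) which pairs of a
centre symbol `f` and a tuple of states `qs` allow `s` to be produced as the left subtree of
`f(c₁, …, c_k)ψ`, where the root of the pattern of `f` is the binary symbol and each `cᵢ` is
accepted in state `qsᵢ`; also record which leaf symbols have an image with left subtree `s`. There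
are finitely many profiles, so two distinct left combs `a ≠ b` share one. By linearity
the variables below the left and the right child of the pattern are disjoint, so in a centre tree
producing `σ(a, u)` the part producing `a` can be exchanged for one producing `b`
(`exists_replace_left`). Applied to the symmetric tree `σ(a, mirror a)` this makes
`σ(b, mirror a)` symmetric, which forces `a = b`.
-/


set_option autoImplicit false

namespace MirrorTrees

/-- The rank function of the alphabet with one symbol, of rank two. -/
def rk₂ : Unit → ℕ := fun _ => 2

/-- Binary trees with a single leaf symbol. -/
abbrev BTree : Type := RTree Unit Unit rk₂

/-- The tree `σ(x, y)`, possibly with further leaf symbols. -/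
def pair {W : Type} (x y : RTree Unit W rk₂) : RTree Unit W rk₂ :=
  .node () (fun i : Fin 2 => ![x, y] i)

theorem pair_inj {W : Type} {x y x' y' : RTree Unit W rk₂} (h : pair x y = pair x' y') :
    x = x' ∧ y = y' := by
  unfold pair at h
  injection h with _ h
  exact ⟨congrFun h (0 : Fin 2), congrFun h (1 : Fin 2)⟩

theorem node_eq_pair {W : Type} (c : Fin 2 → RTree Unit W rk₂) :
    (RTree.node () c : RTree Unit W rk₂) = pair (c 0) (c 1) := by
  unfold pair
  congr 1
  funext i
  fin_cases i <;> rfl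

theorem pair_subst {β : Type} (p r : RTree Unit (Unit ⊕ β) rk₂) (σ : β → BTree) :
    (pair p r).subst σ = pair (p.subst σ) (r.subst σ) := by
  exact node_eq_pair _

theorem pair_ivars {β : Type} (p r : RTree Unit (Unit ⊕ β) rk₂) :
    (pair p r).ivars = p.ivars + r.ivars := by
  exact Fin.sum_univ_two (fun i : Fin 2 => ((![p, r] : Fin 2 → _) i).ivars)

theorem subst_congr {D Y β : Type} {rkD : D → ℕ} (p : RTree D (Y ⊕ β) rkD)
    (σ σ' : β → RTree D Y rkD) (h : ∀ b ∈ p.ivars, σ b = σ' b) : p.subst σ = p.subst σ' := by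
  induction p with
  | leaf v =>
    rcases v with y | b
    · rfl
    · exact h b (by simp [RTree.ivars])
  | node f c ih =>
    simp only [RTree.subst]
    congr 1
    funext i
    exact ih i fun b hb => h b (by
      simp only [RTree.ivars, Multiset.mem_sum]
      exact ⟨i, Finset.mem_univ i, hb⟩)

/-! ### The two homomorphisms -/

/-- The identity homomorphism on binary trees. -/
def idHom : TreeHom Unit Unit rk₂ Unit Unit rk₂ where
  leafMap := .leaf
  symMap _ := .node () fun i => .leaf (.inr i)

/-- The homomorphism `σ ↦ σ(x₂, x₁)`, which reflects binary trees. -/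
def mirrorHom : TreeHom Unit Unit rk₂ Unit Unit rk₂ where
  leafMap := .leaf
  symMap _ := .node () fun i => .leaf (.inr (Fin.rev i))

theorem idHom_apply (t : BTree) : idHom.apply t = t := by
  induction t with
  | leaf v => rfl
  | node f c ih => exact congrArg (RTree.node ()) (funext ih)

theorem mirror_pair (x y : BTree) :
    mirrorHom.apply (pair x y) = pair (mirrorHom.apply y) (mirrorHom.apply x) := by
  exact node_eq_pair _

theorem mirror_mirror (t : BTree) : mirrorHom.apply (mirrorHom.apply t) = t := by
  induction t with
  | leaf v => rfl
  | node f c ih =>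
    have h : (RTree.node f c : BTree) = pair (c (0 : Fin 2)) (c (1 : Fin 2)) := node_eq_pair c
    rw [h, mirror_pair, mirror_pair]
    exact congrArg₂ pair (ih (0 : Fin 2)) (ih (1 : Fin 2))

theorem ivars_idHom : (idHom.symMap ()).ivars = ({(0 : Fin 2)} + {(1 : Fin 2)} : Multiset (Fin 2)) :=
  Fin.sum_univ_two (fun i : Fin 2 => ({i} : Multiset (Fin 2)))

theorem ivars_mirrorHom :
    (mirrorHom.symMap ()).ivars = ({(1 : Fin 2)} + {(0 : Fin 2)} : Multiset (Fin 2)) :=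
  Fin.sum_univ_two (fun i : Fin 2 => ({Fin.rev i} : Multiset (Fin 2)))

theorem idHom_linear : idHom.Linear := by
  intro f
  exact ivars_idHom ▸ (by decide : ({(0 : Fin 2)} + {(1 : Fin 2)} : Multiset (Fin 2)).Nodup)

theorem mirrorHom_linear : mirrorHom.Linear := by
  intro f
  exact ivars_mirrorHom ▸ (by decide : ({(1 : Fin 2)} + {(0 : Fin 2)} : Multiset (Fin 2)).Nodup)

theorem idHom_complete : idHom.Complete := by
  intro f
  exact ivars_idHom ▸
    (by decide : ∀ i : Fin 2, i ∈ ({(0 : Fin 2)} + {(1 : Fin 2)} : Multiset (Fin 2)))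

theorem mirrorHom_complete : mirrorHom.Complete := by
  intro f
  exact ivars_mirrorHom ▸
    (by decide : ∀ i : Fin 2, i ∈ ({(1 : Fin 2)} + {(0 : Fin 2)} : Multiset (Fin 2)))

theorem idHom_symbolToSymbol : idHom.SymbolToSymbol :=
  ⟨fun v => ⟨v, rfl⟩, fun _ i => ⟨i, rfl⟩⟩

theorem mirrorHom_symbolToSymbol : mirrorHom.SymbolToSymbol :=
  ⟨fun v => ⟨v, rfl⟩, fun _ i => ⟨Fin.rev i, rfl⟩⟩

/-- The left comb with `n` inner nodes. -/
def comb : ℕ → BTree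
  | 0 => .leaf ()
  | n + 1 => pair (comb n) (.leaf ())

theorem comb_injective : Function.Injective comb := by
  intro n
  induction n with
  | zero =>
    intro m h
    cases m with
    | zero => rfl
    | succ m => simp [comb, pair] at h
  | succ n ih =>
    intro m h
    cases m with
    | zero => simp [comb, pair] at h
    | succ m => exact congrArg Nat.succ (ih (pair_inj h).1)

/-! ### Exchanging left subtrees in the image of a recognizable language -/

section Profile

variable {G Z : Type} {rkG : G → ℕ}

/-- The ways in which `s` arises as the left subtree of the image of a centre tree whose root
symbol is not erased by `ψ`: pairs of a root symbol and states accepting the direct subtrees, or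
leaf symbols. -/
def profile (ψ : TreeHom G Z rkG Unit Unit rk₂) (A : FTA G Z rkG) (s : BTree) :
    Set ((Σ f : G, Fin (rkG f) → A.Q) ⊕ Z) :=
  { x | match x with
    | .inl ⟨f, qs⟩ => ∃ c : Fin (rkG f) → RTree G Z rkG, (∀ i, A.Reach (qs i) (c i)) ∧
        ∃ p r, ψ.symMap f = pair p r ∧ p.subst (fun i => ψ.apply (c i)) = s
    | .inr z => ∃ u, ψ.leafMap z = pair s u }

/-- If every way of producing `a` as a left subtree is also available for `b`, then `σ(a, u)` can
be replaced by `σ(b, u)` in the image of the trees accepted in a given state. -/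
theorem exists_replace_left (ψ : TreeHom G Z rkG Unit Unit rk₂) (hψ : ψ.Linear)
    (A : FTA G Z rkG) {a b : BTree} (hab : a ≠ b) (h : profile ψ A a ⊆ profile ψ A b)
    (t : RTree G Z rkG) (q : A.Q) (u : BTree) (hq : A.Reach q t) (ht : ψ.apply t = pair a u) :
    ∃ t', A.Reach q t' ∧ ψ.apply t' = pair b u := by
  classical
  induction t generalizing q with
  | leaf z =>
    -- The leaf `z` has one image only, so it cannot produce both `a` and `b`.
    obtain ⟨u', hu'⟩ : ∃ u', ψ.leafMap z = pair b u' :=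
      @h (.inr z) ⟨u, ht⟩
    exact absurd (pair_inj (ht.symm.trans hu')).1 hab
  | node f c ih =>
    cases hq with
    | @node _ _ qs _ htr hc =>
      have ht' : (ψ.symMap f).subst (fun i => ψ.apply (c i)) = pair a u := ht
      cases hs : ψ.symMap f with
      | leaf v =>
        rw [hs] at ht'
        rcases v with y | i
        · simp [RTree.subst, pair] at ht'
        · -- `ψ` erases `f`, keeping the subtree `c i`.
          obtain ⟨t', h1, h2⟩ := ih i (qs i) (hc i) ht'
          refine ⟨.node f (Function.update c i t'), .node htr ?_, ?_⟩
          · intro j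
            by_cases hj : j = i
            · subst hj
              simpa using h1
            · simpa [hj] using hc j
          · simp only [TreeHom.apply, hs, RTree.subst]
            simpa using h2
      | node g d =>
        have hs' : ψ.symMap f = pair (d (0 : Fin 2)) (d (1 : Fin 2)) := hs.trans (node_eq_pair d)
        generalize d (0 : Fin 2) = p at hs'
        generalize d (1 : Fin 2) = r at hs'
        rw [hs', pair_subst] at ht'
        obtain ⟨hp, hr⟩ := pair_inj ht'
        obtain ⟨c', hc', p', r', hs2, hp'⟩ :
            ∃ c' : Fin (rkG f) → RTree G Z rkG, (∀ i, A.Reach (qs i) (c' i)) ∧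
              ∃ p r, ψ.symMap f = pair p r ∧ p.subst (fun i => ψ.apply (c' i)) = b :=
          @h (.inl ⟨f, qs⟩) ⟨c, hc, p, r, hs', hp⟩
        obtain ⟨rfl, rfl⟩ := pair_inj (hs'.symm.trans hs2)
        have hnd := hψ f
        rw [hs', pair_ivars, Multiset.nodup_add] at hnd
        -- Variables of the left pattern take the new subtrees, all others the old ones.
        refine ⟨.node f fun i => if i ∈ p.ivars then c' i else c i, .node htr ?_, ?_⟩
        · intro i
          split_ifs
          exacts [hc' i, hc i]
        · simp only [TreeHom.apply, hs', pair_subst]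
          congr 1
          · rw [← hp']
            exact subst_congr _ _ _ fun i hi => by simp [hi]
          · rw [← hr]
            refine subst_congr _ _ _ fun i hi => ?_
            have : i ∉ p.ivars := fun hi' => Multiset.disjoint_left.mp hnd.2.2 hi' hi
            simp [this]

end Profile

theorem not_inBim : ¬ InBim allHC lHC
    ({ p : BTree × BTree | p.2 = idHom.apply p.1 } ∩ { p | p.2 = mirrorHom.apply p.1 }) := by
  rintro ⟨G, Z, rkG, _, _, φ, ψ, L, -, hψ, ⟨A, rfl⟩, hτ⟩
  have := A.finQ
  obtain ⟨n, m, hnm, hprof⟩ :=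
    Finite.exists_ne_map_eq_of_infinite fun n : ℕ => profile ψ A (comb n)
  have hab : comb n ≠ comb m := fun e => hnm (comb_injective e)
  have hmem : (pair (comb n) (mirrorHom.apply (comb n)),
      pair (comb n) (mirrorHom.apply (comb n))) ∈
      ({ p : BTree × BTree | p.2 = idHom.apply p.1 } ∩ { p | p.2 = mirrorHom.apply p.1 }) := by
    refine ⟨(idHom_apply _).symm, ?_⟩
    change _ = mirrorHom.apply (pair _ _)
    rw [mirror_pair, mirror_mirror]
  rw [hτ] at hmem
  obtain ⟨t, ⟨q, hqf, hq⟩, hpt⟩ := hmem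
  obtain ⟨t', hq', ht'⟩ := exists_replace_left ψ hψ A hab hprof.le t q _ hq
    (congrArg Prod.snd hpt).symm
  have hmem' : (φ.apply t', ψ.apply t') ∈
      ({ p : BTree × BTree | p.2 = idHom.apply p.1 } ∩ { p | p.2 = mirrorHom.apply p.1 }) := by
    rw [hτ]
    exact ⟨t', ⟨q, hqf, hq'⟩, rfl⟩
  have h1 : ψ.apply t' = φ.apply t' := hmem'.1.trans (idHom_apply _)
  have h2 : ψ.apply t' = mirrorHom.apply (φ.apply t') := hmem'.2
  rw [← h1, ht', mirror_pair, mirror_mirror] at h2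
  exact hab (pair_inj h2).1.symm

end MirrorTrees

/-- Any class `C` of tree transformations with
`lcssH ⊆ C ⊆ B(H, Rec, lH)` is not closed under intersection; in particular, there are
two linear complete symbol-to-symbol tree homomorphisms (viewed as tree transformations)
whose intersection is not definable by any bimorphism `(φ, L, ψ)` with `φ` an arbitrary
tree homomorphism, `L` recognizable and `ψ` linear. -/
theorem class_between_lcssH_and_bim_not_closed_under_intersection
    (C : ∀ (S V : Type) (rkS : S → ℕ) (D Y : Type) (rkD : D → ℕ),
      Set (Set (RTree S V rkS × RTree D Y rkD)))
    (hLower : ∀ (S V : Type) (rkS : S → ℕ) (D Y : Type) (rkD : D → ℕ)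
      [Fintype S] [Fintype V] [Fintype D] [Fintype Y]
      (φ : TreeHom S V rkS D Y rkD), φ.Linear → φ.Complete → φ.SymbolToSymbol →
      { p : RTree S V rkS × RTree D Y rkD | p.2 = φ.apply p.1 } ∈ C S V rkS D Y rkD)
    (hUpper : ∀ (S V : Type) (rkS : S → ℕ) (D Y : Type) (rkD : D → ℕ)
      [Fintype S] [Fintype V] [Fintype D] [Fintype Y]
      (τ : Set (RTree S V rkS × RTree D Y rkD)),
      τ ∈ C S V rkS D Y rkD → InBim allHC lHC τ) :
    (¬ ∀ (S V : Type) (rkS : S → ℕ) (D Y : Type) (rkD : D → ℕ)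
        [Fintype S] [Fintype V] [Fintype D] [Fintype Y]
        (τ₁ τ₂ : Set (RTree S V rkS × RTree D Y rkD)),
        τ₁ ∈ C S V rkS D Y rkD → τ₂ ∈ C S V rkS D Y rkD →
        τ₁ ∩ τ₂ ∈ C S V rkS D Y rkD) ∧
    ∃ (S V : Type) (rkS : S → ℕ) (D Y : Type) (rkD : D → ℕ)
      (_ : Fintype S) (_ : Fintype V) (_ : Fintype D) (_ : Fintype Y)
      (ψ₁ ψ₂ : TreeHom S V rkS D Y rkD),
      ψ₁.Linear ∧ ψ₁.Complete ∧ ψ₁.SymbolToSymbol ∧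
      ψ₂.Linear ∧ ψ₂.Complete ∧ ψ₂.SymbolToSymbol ∧
      ¬ InBim allHC lHC
        ({ p : RTree S V rkS × RTree D Y rkD | p.2 = ψ₁.apply p.1 } ∩
          { p | p.2 = ψ₂.apply p.1 }) := by
  open MirrorTrees in
  refine ⟨fun hC => ?_, Unit, Unit, rk₂, Unit, Unit, rk₂, inferInstance, inferInstance,
    inferInstance, inferInstance, idHom, mirrorHom, idHom_linear, idHom_complete,
    idHom_symbolToSymbol, mirrorHom_linear, mirrorHom_complete, mirrorHom_symbolToSymbol,
    not_inBim⟩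
  exact not_inBim (hUpper _ _ _ _ _ _ _ (hC _ _ _ _ _ _ _ _
    (hLower _ _ _ _ _ _ idHom idHom_linear idHom_complete idHom_symbolToSymbol)
    (hLower _ _ _ _ _ _ mirrorHom mirrorHom_linear mirrorHom_complete mirrorHom_symbolToSymbol)))
end

section
/- The class B(qaH, Rec, qaH) of quasi-alphabetic relations is not closed under intersection: there exist quasi-alphabetic relations τ_1, τ_2 such that τ_1 ∩ τ_2 is not a quasi-alphabetic relation. -/
/-!
The counterexample lives on binary trees with a single binary symbol and a single leaf symbol.
Both the identity `(s, t) ↦ (s, t)` and the swap `(s, t) ↦ (t, s)` of the two subtrees of the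
root are quasi-alphabetic relations (`isQARel_permRel`): the center trees carry a mark at the root,
and the homomorphisms may permute the subtrees of marked nodes.

Their intersection is the set of pairs `(t, t)` with `t` having two equal subtrees at the root.
Suppose it were given by a quasi-alphabetic bimorphism `(φ, L, ψ)` with `L` accepted by an
automaton `A`. For infinitely many `s` there is a center tree over `node (s, s)`, and by the
pigeonhole principle two of them, for `s ≠ s'`, are accepted with the same root symbol and the same
states at its direct subtrees. Since `φ` is linear and `s`, `s'` are not leaves, the two subtrees
come from two different variables (`exists_vars_of_apply_node`). Exchanging just one of the
corresponding center subtrees gives a tree in `L` over `node (s, s')`, which is a contradiction.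
-/


set_option autoImplicit false

/-- The ranked alphabet of the counterexample: every symbol is binary. -/
def binRk {S : Type} : S → ℕ := fun _ => 2

/-- Plain binary trees, with one binary symbol and one leaf symbol. -/
abbrev BinTree : Type := RTree Unit Unit (binRk (S := Unit))

/-- Binary trees over the center alphabet, whose nodes carry a Boolean mark. -/
abbrev MarkedTree : Type := RTree Bool Unit (binRk (S := Bool))

/-- The homomorphism that forgets the marks and permutes by `e` the two subtrees of every
node marked `true`. -/
def permHom (e : Equiv.Perm (Fin 2)) :
    TreeHom Bool Unit (binRk (S := Bool)) Unit Unit (binRk (S := Unit)) where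
  leafMap _ := .leaf ()
  symMap g := .node () fun i => .leaf (Sum.inr (if g then e i else i))

theorem permHom_quasiAlphabetic (e : Equiv.Perm (Fin 2)) : (permHom e).QuasiAlphabetic := by
  refine ⟨?_, ?_, fun _ => ⟨(), rfl⟩, fun g i => ⟨_, rfl⟩⟩
  · intro g
    revert g e
    simp only [permHom, RTree.ivars, binRk]
    decide
  · intro g (i : Fin 2)
    simp only [permHom, RTree.ivars]
    refine Multiset.mem_sum.2 ⟨if g then e.symm i else i, Finset.mem_univ _, ?_⟩
    cases g <;> simp <;> exact Multiset.mem_singleton_self _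

theorem node_inj {S V : Type} {rk : S → ℕ} {f : S} {c d : Fin (rk f) → RTree S V rk}
    (h : RTree.node f c = RTree.node f d) : c = d :=
  eq_of_heq (RTree.node.inj h).2

theorem reach_leaf_inv {S V : Type} {rk : S → ℕ} {A : FTA S V rk} {q : A.Q} {v : V}
    (h : A.Reach q (.leaf v)) : A.leafTrans q v := by
  cases h with
  | leaf h => exact h

theorem reach_node_inv {S V : Type} {rk : S → ℕ} {A : FTA S V rk} {q : A.Q} {f : S}
    {c : Fin (rk f) → RTree S V rk} (h : A.Reach q (.node f c)) :
    ∃ qs, A.nodeTrans q f qs ∧ ∀ i, A.Reach (qs i) (c i) := by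
  cases h with
  | node hn hc => exact ⟨_, hn, hc⟩

/-- The automaton accepting the marked trees in which exactly the root is marked `true`. -/
def rootMarked : FTA Bool Unit (binRk (S := Bool)) where
  Q := Bool
  final := {true}
  leafTrans q _ := q = false
  nodeTrans q g qs := q = g ∧ ∀ i, qs i = false

/-- A plain tree viewed as a tree all of whose nodes are marked `false`. -/
def markFalse : BinTree → MarkedTree
  | .leaf v => .leaf v
  | .node _ c => .node false fun i => markFalse (c i)

theorem permHom_apply_markFalse (e : Equiv.Perm (Fin 2)) (t : BinTree) :
    (permHom e).apply (markFalse t) = t := by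
  induction t with
  | leaf v => rfl
  | node f c ih =>
    simp only [markFalse, TreeHom.apply, permHom, RTree.subst]
    exact congrArg _ (funext ih)

theorem reach_markFalse (t : BinTree) : rootMarked.Reach false (markFalse t) := by
  induction t with
  | leaf v => exact .leaf rfl
  | node f c ih => exact .node (qs := fun _ => false) ⟨rfl, fun _ => rfl⟩ fun i => ih i

/-- All the homomorphisms `permHom e` agree on trees without nodes marked `true`. -/
theorem permHom_apply_eq_of_reach_false (e e' : Equiv.Perm (Fin 2)) {t : MarkedTree}
    (h : rootMarked.Reach false t) : (permHom e).apply t = (permHom e').apply t := by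
  induction t with
  | leaf v => rfl
  | node f c ih =>
    obtain ⟨qs, ⟨rfl, hq⟩, hc⟩ := reach_node_inv h
    simp only [TreeHom.apply, permHom, RTree.subst]
    refine congrArg _ (funext fun i => ih i ?_)
    exact hq i ▸ hc i

/-- The relation that permutes by `e` the two subtrees of the root. -/
def permRel (e : Equiv.Perm (Fin 2)) : Set (BinTree × BinTree) :=
  { p | ∃ c : Fin 2 → BinTree, p = (.node () c, .node () fun i => c (e i)) }

theorem isQARel_permRel (e : Equiv.Perm (Fin 2)) : IsQARel (permRel e) := by
  refine ⟨Bool, Unit, binRk, inferInstance, inferInstance, permHom 1, permHom e,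
    { t | ∃ q ∈ rootMarked.final, rootMarked.Reach q t }, permHom_quasiAlphabetic 1,
    permHom_quasiAlphabetic e, ⟨rootMarked, rfl⟩, ?_⟩
  ext p
  constructor
  · rintro ⟨c, rfl⟩
    refine ⟨.node true fun i => markFalse (c i),
      ⟨true, rfl, .node (qs := fun _ => false) ⟨rfl, fun _ => rfl⟩ fun i => reach_markFalse _⟩, ?_⟩
    simp only [TreeHom.apply, permHom_apply_markFalse]
    rfl
  · rintro ⟨t, ⟨q, hq, ht⟩, rfl⟩
    obtain rfl : q = true := hq
    cases t with
    | leaf v => exact absurd (reach_leaf_inv ht) (by simp [rootMarked])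
    | node g c =>
      obtain ⟨qs, ⟨rfl, hqs⟩, hc⟩ := reach_node_inv ht
      refine ⟨fun i => (permHom 1).apply (c i), ?_⟩
      have key : (permHom e).apply (.node true c) =
          .node () fun i => (permHom e).apply (c (e i)) := rfl
      rw [key]
      refine Prod.ext rfl (congrArg (RTree.node ()) (funext fun i => ?_))
      refine permHom_apply_eq_of_reach_false e 1 ?_
      exact hqs (e i) ▸ hc (e i)

/-- The intersection of the identity and the swap relates exactly the trees with two equal
subtrees at the root to themselves. -/
theorem mem_permRel_inter_iff (p : BinTree × BinTree) :
    p ∈ permRel 1 ∩ permRel (Equiv.swap 0 1) ↔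
      ∃ s : BinTree, p = (.node () fun _ => s, .node () fun _ => s) := by
  constructor
  · rintro ⟨⟨c, rfl⟩, ⟨d, hd⟩⟩
    rw [Prod.ext_iff] at hd
    obtain ⟨h1, h2⟩ := hd
    have h1 := node_inj h1
    have h2 := node_inj h2
    have h01 : c 0 = c 1 := by
      have := congrFun h2 (0 : Fin 2)
      simp only [Equiv.Perm.coe_one, id, Equiv.swap_apply_left] at this
      exact this.trans (congrFun h1 (1 : Fin 2)).symm
    have hc : c = fun _ => c 0 := by
      funext i
      fin_cases i
      · rfl
      · exact h01.symm
    refine ⟨c 0, ?_⟩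
    rw [hc]
    rfl
  · rintro ⟨s, rfl⟩
    exact ⟨⟨fun _ => s, rfl⟩, ⟨fun _ => s, rfl⟩⟩

/-- The complete binary tree of height `n`. -/
def fullTree : ℕ → BinTree
  | 0 => .leaf ()
  | n + 1 => .node () fun _ => fullTree n

theorem fullTree_injective : Function.Injective fullTree := by
  intro n
  induction n with
  | zero =>
    intro m h
    cases m with
    | zero => rfl
    | succ m => exact absurd h (by simp [fullTree])
  | succ n ih =>
    intro m h
    cases m with
    | zero => exact absurd h (by simp [fullTree])
    | succ m =>
      have h := node_inj h
      exact congrArg _ (ih (congrFun h (0 : Fin 2)))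

/-- If a quasi-alphabetic homomorphism sends some tree with root `g` to a tree whose two direct
subtrees are complete of positive height, hence not leaves, then both children of the image of `g`
are variables, and by linearity they are distinct. -/
theorem exists_vars_of_apply_node {G Z : Type} {rkG : G → ℕ}
    {φ : TreeHom G Z rkG Unit Unit (binRk (S := Unit))} (hφ : φ.QuasiAlphabetic)
    {g : G} {c : Fin (rkG g) → RTree G Z rkG} {n : ℕ}
    (h : φ.apply (.node g c) = .node () fun _ => fullTree (n + 1)) :
    ∃ j₀ j₁ : Fin (rkG g), j₀ ≠ j₁ ∧ ∀ c' : Fin (rkG g) → RTree G Z rkG,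
      φ.apply (.node g c') =
        .node () ![φ.apply (c' j₀), φ.apply (c' j₁)] := by
  have hlin := hφ.1 g
  have hsh := hφ.2.2.2 g
  simp only [TreeHom.apply] at h ⊢
  generalize φ.symMap g = r at h hlin hsh ⊢
  cases r with
  | leaf v => exact hsh.elim
  | node f d =>
    have h := node_inj h
    have hv : ∀ i, ∃ j, d i = .leaf (Sum.inr j) := by
      intro i
      obtain ⟨v, hv⟩ := hsh i
      cases v with
      | inr j => exact ⟨j, hv⟩
      | inl y =>
        have := congrFun h i
        rw [hv] at this
        exact absurd this (by simp [RTree.subst, fullTree])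
    obtain ⟨j₀, h₀⟩ := hv (0 : Fin 2)
    obtain ⟨j₁, h₁⟩ := hv (1 : Fin 2)
    refine ⟨j₀, j₁, ?_, fun c' => ?_⟩
    · rintro rfl
      have e : (RTree.node f d).ivars = (d (0 : Fin 2)).ivars + (d (1 : Fin 2)).ivars :=
        Fin.sum_univ_two (fun i : Fin 2 => (d i).ivars)
      rw [e, h₀, h₁] at hlin
      simp [RTree.ivars] at hlin
    · refine congrArg (RTree.node ()) (funext fun i => ?_)
      change Fin 2 at i
      fin_cases i
      · exact (congrArg (fun t => RTree.subst t _) h₀)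
      · exact (congrArg (fun t => RTree.subst t _) h₁)

theorem not_isQARel_permRel_inter :
    ¬ IsQARel (permRel 1 ∩ permRel (Equiv.swap 0 1)) := by
  rintro ⟨G, Z, rkG, hG, hZ, φ, ψ, L, hφ, -, ⟨A, rfl⟩, hτ⟩
  have := A.finQ
  have hrun : ∀ n : ℕ, ∃ k : (g : G) × (Fin (rkG g) → A.Q), ∃ q ∈ A.final,
      ∃ c : Fin (rkG k.1) → RTree G Z rkG, A.nodeTrans q k.1 k.2 ∧
        (∀ i, A.Reach (k.2 i) (c i)) ∧
        φ.apply (.node k.1 c) = .node () fun _ => fullTree (n + 1) := by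
    intro n
    have hmem := (mem_permRel_inter_iff _).2 ⟨fullTree (n + 1), rfl⟩
    rw [hτ] at hmem
    obtain ⟨t, ⟨q, hq, ht⟩, hp⟩ := hmem
    have h1 := (congrArg Prod.fst hp).symm
    cases ht with
    | @leaf _ v _ =>
      obtain ⟨y, hy⟩ := hφ.2.2.1 v
      simp only [TreeHom.apply, hy] at h1
      exact absurd h1 (by simp)
    | @node _ g qs c hn hc => exact ⟨⟨g, qs⟩, q, hq, c, hn, hc, h1⟩
  choose k hk using hrun
  -- Finitely many root transitions serve infinitely many trees, so two trees share one.
  obtain ⟨n, m, hnm, hkk⟩ := Finite.exists_ne_map_eq_of_infinite k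
  obtain ⟨q, hq, c, hn, hc, ha⟩ := hk n
  have hm := hk m
  rw [← hkk] at hm
  obtain ⟨-, -, c', -, hc', ha'⟩ := hm
  obtain ⟨j₀, j₁, hj, hform⟩ := exists_vars_of_apply_node hφ ha
  rw [hform] at ha ha'
  have ha := node_inj ha
  have ha' := node_inj ha'
  have e₀ : φ.apply (c j₀) = fullTree (n + 1) := congrFun ha (0 : Fin 2)
  have e₁ : φ.apply (c' j₁) = fullTree (m + 1) := congrFun ha' (1 : Fin 2)
  -- Grafting the second tree's subtree at `j₁` into the first keeps the run accepting.
  have hL : ∃ t ∈ { t | ∃ q ∈ A.final, A.Reach q t },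
      (φ.apply (.node (k n).1 (Function.update c j₁ (c' j₁))), ψ.apply
        (.node (k n).1 (Function.update c j₁ (c' j₁)))) = (φ.apply t, ψ.apply t) := by
    refine ⟨_, ⟨q, hq, .node hn fun i => ?_⟩, rfl⟩
    by_cases hi : i = j₁
    · subst hi
      simpa using hc' i
    · simpa [hi] using hc i
  have hmem := (Set.ext_iff.1 hτ _).2 hL
  obtain ⟨s, hs⟩ := (mem_permRel_inter_iff _).1 hmem
  have hs := congrArg Prod.fst hs
  rw [hform] at hs
  have hs := node_inj hs
  have s₀ : φ.apply (Function.update c j₁ (c' j₁) j₀) = s := congrFun hs (0 : Fin 2)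
  have s₁ : φ.apply (Function.update c j₁ (c' j₁) j₁) = s := congrFun hs (1 : Fin 2)
  rw [Function.update_of_ne hj, e₀] at s₀
  rw [Function.update_self, e₁] at s₁
  exact hnm (Nat.succ_injective (fullTree_injective (s₀.trans s₁.symm)))

/-- The class of quasi-alphabetic relations is not closed under
intersection: there are quasi-alphabetic relations `τ₁, τ₂` such that `τ₁ ∩ τ₂` is not
a quasi-alphabetic relation. -/
theorem isQARel_not_closed_under_intersection :
    ∃ (S V : Type) (rkS : S → ℕ) (D Y : Type) (rkD : D → ℕ)
      (_ : Fintype S) (_ : Fintype V) (_ : Fintype D) (_ : Fintype Y)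
      (τ₁ τ₂ : Set (RTree S V rkS × RTree D Y rkD)),
      IsQARel τ₁ ∧ IsQARel τ₂ ∧ ¬ IsQARel (τ₁ ∩ τ₂) := by
  exact ⟨Unit, Unit, binRk, Unit, Unit, binRk, inferInstance, inferInstance, inferInstance,
    inferInstance, permRel 1, permRel (Equiv.swap 0 1), isQARel_permRel _, isQARel_permRel _,
    not_isQARel_permRel_inter⟩
end

section
/- The class B(qaH, Rec, qaH) of quasi-alphabetic relations is not closed under complementation: there exists a quasi-alphabetic relation τ ⊆ T_Σ(V) × T_Δ(Y) whose complement (T_Σ(V) × T_Δ(Y)) \ τ is not a quasi-alphabetic relation. -/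
/-!
The empty relation is quasi-alphabetic (take the empty center language), while its complement,
the full relation, is not: a quasi-alphabetic homomorphism sends leaves to leaves and
symbols to shallow trees with a symbol at the root, so it sends a tree to a leaf exactly when that
tree is a leaf (`TreeHom.QuasiAlphabetic.apply_eq_leaf_iff`).  Hence a quasi-alphabetic relation
never contains a pair consisting of a leaf and a non-leaf tree.
-/

set_option autoImplicit false

/-- A quasi-alphabetic homomorphism preserves and reflects being a single leaf. -/
theorem TreeHom.QuasiAlphabetic.apply_eq_leaf_iff {S V D Y : Type} {rkS : S → ℕ} {rkD : D → ℕ}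
    {φ : TreeHom S V rkS D Y rkD} (hφ : φ.QuasiAlphabetic) (t : RTree S V rkS) :
    (∃ y, φ.apply t = RTree.leaf y) ↔ ∃ v, t = RTree.leaf v := by
  obtain ⟨-, -, hleaf, hshallow⟩ := hφ
  cases t with
  | leaf v => exact iff_of_true (hleaf v) ⟨v, rfl⟩
  | node f c =>
    have hf := hshallow f
    rw [TreeHom.apply]
    cases hs : φ.symMap f with
    | leaf w => rw [hs] at hf; exact hf.elim
    | node g d => simp [RTree.subst]

theorem isQARel_empty {S V D Y : Type} {rkS : S → ℕ} {rkD : D → ℕ} :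
    IsQARel (∅ : Set (RTree S V rkS × RTree D Y rkD)) := by
  refine ⟨Empty, Empty, Empty.elim, inferInstance, inferInstance,
    ⟨fun v => v.elim, fun f => f.elim⟩, ⟨fun v => v.elim, fun f => f.elim⟩, ∅,
    ⟨fun f => f.elim, fun f => f.elim, fun v => v.elim, fun f => f.elim⟩,
    ⟨fun f => f.elim, fun f => f.elim, fun v => v.elim, fun f => f.elim⟩,
    ⟨{ Q := Empty, final := ∅, leafTrans := fun _ _ => False,
       nodeTrans := fun _ _ _ => False }, ?_⟩, ?_⟩
  · simp
  · simp

/-- The class of quasi-alphabetic relations is not closed under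
complementation: there is a quasi-alphabetic relation `τ ⊆ T_S(V) × T_D(Y)` whose
complement is not a quasi-alphabetic relation. -/
theorem isQARel_not_closed_under_complement :
    ∃ (S V : Type) (rkS : S → ℕ) (D Y : Type) (rkD : D → ℕ)
      (_ : Fintype S) (_ : Fintype V) (_ : Fintype D) (_ : Fintype Y)
      (τ : Set (RTree S V rkS × RTree D Y rkD)),
      IsQARel τ ∧ ¬ IsQARel τᶜ := by
  -- One unary symbol and one leaf symbol on both sides.
  refine ⟨Unit, Unit, fun _ => 1, Unit, Unit, fun _ => 1, inferInstance, inferInstance,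
    inferInstance, inferInstance, ∅, isQARel_empty, ?_⟩
  rintro ⟨G, Z, rkG, _, _, φ, ψ, L, hφ, hψ, -, hτ⟩
  have hmem : ((RTree.leaf (), RTree.node () fun _ => RTree.leaf ()) :
      RTree Unit Unit (fun _ => 1) × RTree Unit Unit (fun _ => 1)) ∈
      (∅ : Set (RTree Unit Unit (fun _ => 1) × RTree Unit Unit (fun _ => 1)))ᶜ := by simp
  rw [hτ] at hmem
  obtain ⟨t, -, ht⟩ := hmem
  obtain ⟨hl, hr⟩ := Prod.mk.inj ht
  obtain ⟨y, hy⟩ := (hψ.apply_eq_leaf_iff t).2 ((hφ.apply_eq_leaf_iff t).1 ⟨(), hl.symm⟩)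
  rw [hy] at hr
  cases hr
end

section
/- For all context-free string languages K_1 and K_2 over the same alphabet V, there exists a quasi-alphabetic tree bimorphism B such that yd(τ_B) = K_1 × K_2, i.e., the translation defined by B is exactly the Cartesian product of K_1 and K_2. -/
/-!
Let `g true` and `g false` be grammars for `K₁` and `K₂`.  The centre trees consist of a binary
root symbol whose two subtrees are derivation trees of `g true` and of `g false`; terminals are
nullary symbols of the centre alphabet.  The homomorphism `prodHom g b` copies the tree, except
that a terminal `v` belonging to `g b` becomes a unary symbol above the leaf `v`.  Terminals of the
other grammar become nullary symbols, which contribute nothing to the yield.  Hence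
`prodHom g true` reads off the word derived in the first subtree, `prodHom g false` the word
derived in the second one, and the two words are independent.

The centre language is local: it is recognized by the automaton whose states are the centre symbols
themselves (nonterminals cannot serve as states, since a `ContextFreeGrammar` may have infinitely
many).  `reach_sound` and `parse_of_derives` show that the recognized trees below the root are
exactly the derivation trees.
-/

set_option autoImplicit false

namespace ProductBimorphism

variable {V : Type}

/-! ### The automaton and the homomorphisms -/

/-- The centre alphabet: `none` is the binary root symbol, `some ⟨b, .inl r⟩` is the rule `r` of
the grammar `g b`, and `some ⟨b, .inr v⟩` is the terminal `v` occurring in a derivation of `g b`. -/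
abbrev Sym (g : Bool → ContextFreeGrammar V) : Type :=
  Option (Σ b : Bool, {r // r ∈ (g b).rules} ⊕ V)

/-- The rank of a centre symbol; a rule has one child for every symbol of its right-hand side. -/
def symRk (g : Bool → ContextFreeGrammar V) : Sym g → ℕ
  | none => 2
  | some ⟨_, .inl r⟩ => r.1.output.length
  | some ⟨_, .inr _⟩ => 0

/-- The grammar symbol from which a derivation tree with the given root symbol derives; the
separate root symbol `none` has no such grammar symbol. -/
def head (g : Bool → ContextFreeGrammar V) : Sym g → Option (Σ b : Bool, Symbol V (g b).NT)
  | none => none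
  | some ⟨b, .inl r⟩ => some ⟨b, .nonterminal r.1.input⟩
  | some ⟨b, .inr v⟩ => some ⟨b, .terminal v⟩

/-- The grammar symbols from which the subtrees below a centre symbol have to derive. -/
def kids (g : Bool → ContextFreeGrammar V) :
    (f : Sym g) → Fin (symRk g f) → Σ b : Bool, Symbol V (g b).NT
  | none => ![⟨true, .nonterminal (g true).initial⟩, ⟨false, .nonterminal (g false).initial⟩]
  | some ⟨b, .inl r⟩ => fun i => ⟨b, r.1.output.get i⟩
  | some ⟨_, .inr _⟩ => Fin.elim0

/-- The automaton whose state at a node is the symbol there, and which checks that the children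
of every node are those prescribed by `kids`. -/
def derivFTA [Fintype V] (g : Bool → ContextFreeGrammar V) : FTA (Sym g) Empty (symRk g) where
  Q := Sym g
  final := {none}
  leafTrans _ _ := False
  nodeTrans q f qs := q = f ∧ ∀ i, head g (qs i) = some (kids g f i)

/-- The letter that a centre symbol contributes to the word derived in `g b`, if any. -/
def emit (g : Bool → ContextFreeGrammar V) (b : Bool) : Sym g → Option V
  | some ⟨b', .inr v⟩ => if b' = b then some v else none
  | _ => none

/-- The ranks of the output alphabet: the centre alphabet with an extra unary symbol. -/
abbrev outRk (g : Bool → ContextFreeGrammar V) : Sym g ⊕ Unit → ℕ :=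
  Sum.elim (symRk g) fun _ => 1

/-- The homomorphism producing the word derived in `g b`: a symbol emitting `v` is sent to the
unary symbol above `v`, and every other symbol `f` to `f(x₁,…,x_k)`. -/
def prodHom (g : Bool → ContextFreeGrammar V) (b : Bool) :
    TreeHom (Sym g) Empty (symRk g) (Sym g ⊕ Unit) V (outRk g) where
  leafMap := Empty.elim
  symMap f := match emit g b f with
    | some v => .node (.inr ()) fun _ => .leaf (.inl v)
    | none => .node (.inl f) fun i => .leaf (.inr i)

variable {g : Bool → ContextFreeGrammar V}

lemma symRk_eq_zero {b : Bool} {f : Sym g} {v : V} (h : emit g b f = some v) :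
    symRk g f = 0 := by
  rcases f with _ | ⟨b', r | u⟩
  · simp [emit] at h
  · simp [emit] at h
  · rfl

lemma prodHom_quasiAlphabetic (b : Bool) : (prodHom g b).QuasiAlphabetic := by
  refine ⟨fun f => ?_, fun f i => ?_, fun v => v.elim, fun f => ?_⟩
  · cases h : emit g b f with
    | some v => simp [prodHom, h, RTree.ivars]
    | none =>
      simp only [prodHom, h, RTree.ivars]
      exact (Finset.sum_multiset_singleton (Finset.univ : Finset (Fin (symRk g f)))).symm ▸
        Finset.univ.nodup
  · cases h : emit g b f with
    | some v => exact absurd i.2 (by simp [symRk_eq_zero h])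
    | none =>
      simp only [prodHom, h, RTree.ivars]
      exact (Finset.sum_multiset_singleton (Finset.univ : Finset (Fin (symRk g f)))).symm ▸
        Finset.mem_univ i
  · cases h : emit g b f with
    | some v =>
      simp only [prodHom, h, RTree.Shallow]
      exact fun _ => ⟨_, rfl⟩
    | none =>
      simp only [prodHom, h, RTree.Shallow]
      exact fun _ => ⟨_, rfl⟩

/-! ### Output words -/

/-- The `b`-th output word of a centre tree. -/
def word (b : Bool) (t : RTree (Sym g) Empty (symRk g)) : List V :=
  ((prodHom g b).apply t).yield

lemma word_of_emit {b : Bool} {f : Sym g} {v : V} (h : emit g b f = some v)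
    (c : Fin (symRk g f) → RTree (Sym g) Empty (symRk g)) :
    word b (.node f c) = [v] := by
  simp [word, TreeHom.apply, prodHom, h, RTree.subst, RTree.yield]

lemma word_of_not_emit {b : Bool} {f : Sym g} (h : emit g b f = none)
    (c : Fin (symRk g f) → RTree (Sym g) Empty (symRk g)) :
    word b (.node f c) = (List.ofFn fun i => word b (c i)).flatten := by
  simp only [word, TreeHom.apply]
  rw [show (prodHom g b).symMap f = .node (.inl f) fun i => .leaf (.inr i) by simp [prodHom, h]]
  rfl

/-! ### Accepted trees are derivation trees -/

lemma derives_flatten {G : ContextFreeGrammar V} :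
    ∀ (l : List (Symbol V G.NT)) (w : Fin l.length → List V),
      (∀ i, G.Derives [l.get i] ((w i).map .terminal)) →
      G.Derives l ((List.ofFn w).flatten.map .terminal)
  | [], w, _ => by simpa using .refl _
  | s :: l, w, h => by
    have h0 := h 0
    have ih := derives_flatten l (fun i => w i.succ) fun i => h i.succ
    have h1 := h0.append_right l
    have h2 := ih.append_left ((w 0).map .terminal)
    have h3 := h1.trans h2
    rw [← List.map_append] at h3
    simpa [List.ofFn_succ] using h3

lemma head_eq_some {q : Sym g} {b : Bool} {s : Symbol V (g b).NT}
    (h : head g q = some ⟨b, s⟩) :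
    (∃ r, q = some ⟨b, .inl r⟩ ∧ s = .nonterminal r.1.input) ∨
      ∃ v, q = some ⟨b, .inr v⟩ ∧ s = .terminal v := by
  rcases q with _ | ⟨b', r | v⟩
  · simp [head] at h
  · simp only [head, Option.some.injEq, Sigma.mk.injEq] at h
    obtain ⟨rfl, h⟩ := h
    exact .inl ⟨r, rfl, (eq_of_heq h).symm⟩
  · simp only [head, Option.some.injEq, Sigma.mk.injEq] at h
    obtain ⟨rfl, h⟩ := h
    exact .inr ⟨v, rfl, (eq_of_heq h).symm⟩

/-- A tree accepted in a state belonging to `g b` is a derivation tree of its `b`-th output word,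
and its other output word is empty. -/
lemma reach_sound [Fintype V] {q : (derivFTA g).Q} {t : RTree (Sym g) Empty (symRk g)}
    (ht : (derivFTA g).Reach q t) :
    ∀ (b : Bool) (s : Symbol V (g b).NT), head g q = some ⟨b, s⟩ →
      (g b).Derives [s] ((word b t).map .terminal) ∧ ∀ b', b' ≠ b → word b' t = [] := by
  induction ht with
  | leaf h => exact h.elim
  | @node q f qs c h _ ih =>
    intro b s hs
    obtain ⟨rfl, hk⟩ := h
    rcases head_eq_some hs with ⟨r, rfl, rfl⟩ | ⟨v, rfl, rfl⟩
    · have key := fun i => ih i b (r.1.output.get i) (hk i)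
      refine ⟨?_, fun b' hb' => ?_⟩
      · rw [word_of_not_emit rfl]
        refine .head ⟨r.1, r.2, ContextFreeRule.Rewrites.input_output⟩ ?_
        exact derives_flatten r.1.output _ fun i => (key i).1
      · rw [word_of_not_emit rfl, List.flatten_eq_nil_iff]
        intro l hl
        obtain ⟨i, rfl⟩ := (List.mem_ofFn' _ _).1 hl
        exact (key i).2 b' hb'
    · refine ⟨?_, fun b' hb' => ?_⟩
      · rw [word_of_emit (v := v) (by simp [emit])]
        exact .refl _
      · rw [word_of_not_emit (by simp [emit, hb'.symm])]
        rfl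

/-! ### Derivations give accepted trees -/

/-- `Parse g b s w`: some accepted tree derives the word `w` from the symbol `s` of `g b`. -/
def Parse [Fintype V] (g : Bool → ContextFreeGrammar V) (b : Bool) (s : Symbol V (g b).NT)
    (w : List V) : Prop :=
  ∃ q t, head g q = some ⟨b, s⟩ ∧ (derivFTA g).Reach q t ∧ word b t = w

lemma reach_node [Fintype V] {f : Sym g} {qs : Fin (symRk g f) → Sym g}
    {c : Fin (symRk g f) → RTree (Sym g) Empty (symRk g)}
    (hk : ∀ i, head g (qs i) = some (kids g f i)) (hc : ∀ i, (derivFTA g).Reach (qs i) (c i)) :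
    (derivFTA g).Reach f (.node f c) :=
  .node (A := derivFTA g) (q := f) (qs := qs) ⟨rfl, hk⟩ hc

lemma parse_terminal [Fintype V] (b : Bool) (v : V) : Parse g b (.terminal v) [v] :=
  ⟨some ⟨b, .inr v⟩, .node (some ⟨b, .inr v⟩) Fin.elim0, rfl,
    reach_node (qs := Fin.elim0) (fun i => i.elim0) fun i => i.elim0,
    word_of_emit (by simp [emit]) _⟩

lemma parse_rule [Fintype V] {b : Bool} {r : ContextFreeRule V (g b).NT} (hr : r ∈ (g b).rules)
    {ws : List (List V)} (h : List.Forall₂ (Parse g b) r.output ws) :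
    Parse g b (.nonterminal r.input) ws.flatten := by
  obtain ⟨hlen, h⟩ := List.forall₂_iff_get.1 h
  let f : Sym g := some ⟨b, .inl ⟨r, hr⟩⟩
  have h' : ∀ i : Fin (symRk g f), Parse g b (r.output.get i) (ws.get (Fin.cast hlen i)) :=
    fun i => h i.1 i.2 (hlen ▸ i.2)
  choose qs c hq hc hw using h'
  refine ⟨f, .node f c, rfl, reach_node hq hc, ?_⟩
  rw [word_of_not_emit rfl]
  congr 1
  refine List.ext_get (by simpa [symRk] using hlen) fun n h1 h2 => ?_
  simp only [List.get_ofFn]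
  exact hw _

lemma forall₂_append_split {α β : Type} {R : α → β → Prop} :
    ∀ (l₁ l₂ : List α) {l : List β}, List.Forall₂ R (l₁ ++ l₂) l →
      ∃ m₁ m₂, List.Forall₂ R l₁ m₁ ∧ List.Forall₂ R l₂ m₂ ∧ l = m₁ ++ m₂
  | [], _, l, h => ⟨[], l, .nil, h, rfl⟩
  | _ :: l₁, l₂, _, .cons h₁ h => by
    obtain ⟨m₁, m₂, h₂, h₃, rfl⟩ := forall₂_append_split l₁ l₂ h
    exact ⟨_ :: m₁, m₂, .cons h₁ h₂, h₃, rfl⟩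

/-- Every derivation of a terminal word from a sentential form splits into derivation trees, one
for each symbol of the form. -/
lemma parse_of_derives [Fintype V] {b : Bool} {l : List (Symbol V (g b).NT)} {w : List V}
    (h : (g b).Derives l (w.map .terminal)) :
    ∃ ws, List.Forall₂ (Parse g b) l ws ∧ ws.flatten = w := by
  induction h using Relation.ReflTransGen.head_induction_on with
  | refl =>
    refine ⟨w.map fun v => [v], ?_, ?_⟩
    · rw [List.forall₂_map_left_iff, List.forall₂_map_right_iff, List.forall₂_same]
      exact fun v _ => parse_terminal b v
    · induction w <;> simp_all
  | head h _ ih =>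
    obtain ⟨r, hr, h⟩ := h
    obtain ⟨p, q, rfl, rfl⟩ := h.exists_parts
    obtain ⟨ws, hws, rfl⟩ := ih
    obtain ⟨ws', w₃, h', h₃, rfl⟩ := forall₂_append_split _ _ hws
    obtain ⟨w₁, w₂, h₁, h₂, rfl⟩ := forall₂_append_split _ _ h'
    refine ⟨w₁ ++ [w₂.flatten] ++ w₃, ?_, by simp⟩
    exact List.rel_append (List.rel_append h₁ (.cons (parse_rule hr h₂) .nil)) h₃

end ProductBimorphism

open ProductBimorphism

/-- For all context-free string languages `K₁` and `K₂` over the same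
alphabet `V`, there exists a quasi-alphabetic tree bimorphism `B = (φ, L, ψ)` whose
translation `yd(τ_B) = {(yd(tφ), yd(tψ)) | t ∈ L}` is exactly `K₁ × K₂`. -/
theorem exists_qa_bimorphism_yield_eq_product_of_contextFree {V : Type} [Fintype V]
    (K₁ K₂ : Language V) (h₁ : K₁.IsContextFree) (h₂ : K₂.IsContextFree) :
    ∃ (G Z S D : Type) (rkG : G → ℕ) (rkS : S → ℕ) (rkD : D → ℕ)
      (_ : Fintype G) (_ : Fintype Z) (_ : Fintype S) (_ : Fintype D)
      (φ : TreeHom G Z rkG S V rkS) (ψ : TreeHom G Z rkG D V rkD)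
      (L : Set (RTree G Z rkG)),
      φ.QuasiAlphabetic ∧ ψ.QuasiAlphabetic ∧ Recognizable L ∧
      { q : List V × List V | ∃ t ∈ L, q = ((φ.apply t).yield, (ψ.apply t).yield) }
        = { q : List V × List V | q.1 ∈ K₁ ∧ q.2 ∈ K₂ } := by
  obtain ⟨g₁, rfl⟩ := h₁
  obtain ⟨g₂, rfl⟩ := h₂
  let g : Bool → ContextFreeGrammar V := fun b => if b then g₁ else g₂
  refine ⟨Sym g, Empty, Sym g ⊕ Unit, Sym g ⊕ Unit, symRk g, outRk g, outRk g, inferInstance,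
    inferInstance, inferInstance, inferInstance, prodHom g true, prodHom g false,
    {t | ∃ q ∈ (derivFTA g).final, (derivFTA g).Reach q t}, prodHom_quasiAlphabetic _,
    prodHom_quasiAlphabetic _, ⟨derivFTA g, rfl⟩, ?_⟩
  ext ⟨u, w⟩
  simp only [Set.mem_ofPred_eq, Prod.mk.injEq, ContextFreeGrammar.mem_language_iff]
  change (∃ t, _ ∧ u = word true t ∧ w = word false t) ↔ _
  constructor
  · rintro ⟨t, ⟨q, hq, ht⟩, rfl, rfl⟩
    cases ht with
    | leaf h => exact h.elim
    | @node _ f qs c h hc =>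
      obtain ⟨rfl, hk⟩ := h
      obtain rfl : q = none := hq
      obtain ⟨hd₀, he₀⟩ := reach_sound (hc (0 : Fin 2)) true _ (hk (0 : Fin 2))
      obtain ⟨hd₁, he₁⟩ := reach_sound (hc (1 : Fin 2)) false _ (hk (1 : Fin 2))
      have hword : ∀ b, word b (.node none c) =
          word b (c (0 : Fin 2)) ++ word b (c (1 : Fin 2)) := fun b => by
        rw [word_of_not_emit rfl]
        change (List.ofFn fun i : Fin 2 => word b (c i)).flatten = _
        simp [List.ofFn_succ]
      rw [hword, hword, he₀ false (by decide), he₁ true (by decide), List.append_nil,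
        List.nil_append]
      exact ⟨hd₀, hd₁⟩
  · rintro ⟨hu, hw⟩
    have parse : ∀ (b : Bool) (x : List V),
        (g b).Derives [.nonterminal (g b).initial] (x.map .terminal) →
        Parse g b (.nonterminal (g b).initial) x := fun b x h => by
      obtain ⟨ws, hws, rfl⟩ := parse_of_derives h
      cases hws with
      | cons h₁ h₂ =>
        cases h₂
        simpa using h₁
    obtain ⟨q₀, t₀, hq₀, ht₀, rfl⟩ := parse true u hu
    obtain ⟨q₁, t₁, hq₁, ht₁, rfl⟩ := parse false w hw
    have he₀ := (reach_sound ht₀ true _ hq₀).2 false (by decide)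
    have he₁ := (reach_sound ht₁ false _ hq₁).2 true (by decide)
    let c : Fin (symRk g none) → RTree (Sym g) Empty (symRk g) :=
      (![t₀, t₁] : Fin 2 → RTree (Sym g) Empty (symRk g))
    let qs : Fin (symRk g none) → Sym g := (![q₀, q₁] : Fin 2 → Sym g)
    have hword : ∀ b, word b (.node (none : Sym g) c) = word b t₀ ++ word b t₁ := fun b => by
      rw [word_of_not_emit rfl]
      change (List.ofFn fun i : Fin 2 => word b (c i)).flatten = _
      simp [List.ofFn_succ, c]
    refine ⟨.node (none : Sym g) c, ⟨none, rfl, reach_node (qs := qs) ?_ ?_⟩, ?_, ?_⟩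
    · exact Fin.forall_fin_two.2 ⟨hq₀, hq₁⟩
    · exact Fin.forall_fin_two.2 ⟨ht₀, ht₁⟩
    · rw [hword, he₁, List.append_nil]
    · rw [hword, he₀, List.nil_append]
end
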